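/- arXiv:1608.02009 — 3 statements merged into one kernel-verified Lean document; each statement's English description precedes it below -/
import Mathlib

section
/- Let n ≥ 1, α ∈ (0,1) and q ∈ (0,2]. There exists a constant C > 0, depending only on n, α and q, such that for every measurable function u : ℝⁿ → ℝ and every x₀ ∈ ℝⁿ and r > 0 one has C⁻¹ Φ_α(u, B(x₀, r/16)) ≤ Ψ_{α,q}(u, B(x₀, r)) ≤ C Φ_α(u, B(x₀, 16r)). -/
open MeasureTheory Metric Filter Set ENNReal NNReal

noncomputable section

/-- Points of `ℝⁿ`. -/
abbrev Pt (n : ℕ) := EuclideanSpace ℝ (Fin n)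

/-- The axis-parallel closed cube with lower corner `c` and edge length `r`. -/
def closedCube {n : ℕ} (c : Pt n) (r : ℝ) : Set (Pt n) :=
  {x | ∀ i, c i ≤ x i ∧ x i ≤ c i + r}

/-- `Ncov r E`: the minimal number of axis-parallel closed cubes of edge length `r`
needed to cover `E` (junk value `0` if no finite cover exists). -/
def Ncov {n : ℕ} (r : ℝ) (E : Set (Pt n)) : ℕ :=
  sInf {m : ℕ | ∃ s : Finset (Pt n), s.card = m ∧ E ⊆ ⋃ c ∈ s, closedCube c r}

/-- Upper Minkowski dimension (intended for bounded sets). -/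
def dimM {n : ℕ} (F : Set (Pt n)) : ℝ :=
  limsup (fun r : ℝ => Real.log (Ncov r F) / Real.log (1 / r)) (nhdsWithin 0 (Ioi 0))

/-- The set of ratios `log N_cov(r, E ∩ B) / log (r_B / r)` over balls `B = B(x, r_B)`
with `N * r ≤ r_B ≤ R`. -/
def locRatios {n : ℕ} (E : Set (Pt n)) (N r R : ℝ) : Set ℝ :=
  {d | ∃ (x : Pt n) (rB : ℝ), 0 < rB ∧ N * r ≤ rB ∧ rB ≤ R ∧
        d = Real.log (Ncov r (E ∩ ball x rB)) / Real.log (rB / r)}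

/-- The local self-similar Minkowski dimension. -/
def dimLoc {n : ℕ} (E : Set (Pt n)) : ℝ :=
  liminf (fun N : ℝ =>
    limsup (fun r : ℝ => sSup (locRatios E N r 1)) (nhdsWithin 0 (Ioi 0))) atTop

/-- The global self-similar Minkowski dimension. -/
def dimGlob {n : ℕ} (E : Set (Pt n)) : ℝ :=
  liminf (fun N : ℝ =>
    sSup {d : ℝ | ∃ r : ℝ, 0 < r ∧ ∃ (x : Pt n) (rB : ℝ), 0 < rB ∧ N * r ≤ rB ∧
      d = Real.log (Ncov r (E ∩ ball x rB)) / Real.log (rB / r)}) atTop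

/-- The `Q_α`-energy `Φ_α(u, B(x₀,r)) = |B|^{2α/n-1} ∬_{B×B} |u(x)-u(y)|²/|x-y|^{n+2α}`. -/
def Phi {n : ℕ} (α : ℝ) (u : Pt n → ℝ) (x₀ : Pt n) (r : ℝ) : ℝ≥0∞ :=
  (volume (ball x₀ r)) ^ (2 * α / (n : ℝ) - 1) *
    ∫⁻ x in ball x₀ r, ∫⁻ y in ball x₀ r,
      ENNReal.ofReal (|u x - u y| ^ 2 / ‖x - y‖ ^ ((n : ℝ) + 2 * α))

/-- The `Q_α`-norm of `u`. -/
def Qnorm {n : ℕ} (α : ℝ) (u : Pt n → ℝ) : ℝ≥0∞ :=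
  ⨆ (x₀ : Pt n) (r : ℝ) (_ : 0 < r),
    (ENNReal.ofReal (r ^ (2 * α - (n : ℝ))) *
      ∫⁻ x in ball x₀ r, ∫⁻ y in ball x₀ r,
        ENNReal.ofReal (|u x - u y| ^ 2 / ‖x - y‖ ^ ((n : ℝ) + 2 * α))) ^ (1/2 : ℝ)

/-- Membership in `Q_α(ℝⁿ)`: `u ∈ L²_loc` and the `Q_α`-norm is finite. -/
def MemQ {n : ℕ} (α : ℝ) (u : Pt n → ℝ) : Prop :=
  LocallyIntegrable (fun x => |u x| ^ 2) volume ∧ Qnorm α u < ⊤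

/-- `Ψ_{α,q}(u, B(x₀,r))`. -/
def Psi {n : ℕ} (α q : ℝ) (u : Pt n → ℝ) (x₀ : Pt n) (r : ℝ) : ℝ≥0∞ :=
  ∑' k : ℕ, ENNReal.ofReal ((2:ℝ) ^ (2 * (k:ℝ) * α)) *
    ((volume (ball x₀ r))⁻¹ * ∫⁻ x in ball x₀ r,
      ⨅ c : ℝ, ((volume (ball x ((2:ℝ) ^ (-(k:ℝ)) * r)))⁻¹ *
        ∫⁻ z in ball x ((2:ℝ) ^ (-(k:ℝ)) * r), ENNReal.ofReal (|u z - c| ^ q)) ^ (2 / q))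

/-- The quantity `inf_c ( ⨍_{B(x,ρ)} |u - c|^σ )^{1/σ}`. -/
def oscAvg {n : ℕ} (σ : ℝ) (u : Pt n → ℝ) (x : Pt n) (ρ : ℝ) : ℝ≥0∞ :=
  ⨅ c : ℝ, ((volume (ball x ρ))⁻¹ *
    ∫⁻ w in ball x ρ, ENNReal.ofReal (|u w - c| ^ σ)) ^ (1/σ)

/-- `f` is `η`-quasisymmetric, where the homeomorphism `η` of `[0,∞)` is encoded as an
order isomorphism of `ℝ≥0`. -/
def IsQS {n : ℕ} (f : Pt n → Pt n) (η : ℝ≥0 ≃o ℝ≥0) : Prop :=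
  ∀ x a b : Pt n, x ≠ b →
    nndist (f x) (f a) ≤ η (nndist x a / nndist x b) * nndist (f x) (f b)

/-- The local Muckenhoupt class `A₁(ℝⁿ; S)`: the `A₁` condition holds on every ball
`B(x₀,r)` with `2r < dist(x₀, S)`. -/
def MemA1 {n : ℕ} (w : Pt n → ℝ) (S : Set (Pt n)) : Prop :=
  ∃ C > 0, ∀ (x₀ : Pt n) (r : ℝ), 0 < r →
    ENNReal.ofReal (2 * r) < EMetric.infEdist x₀ S →
    ⨍ x in ball x₀ r, w x ∂volume ≤ C * essInf w (volume.restrict (ball x₀ r))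

/-- `J` is the a.e. Jacobian of `f` (`J = |det Df|` a.e.) and the change-of-variables
formula holds for all nonnegative measurable integrands. -/
def JacobianCOV {n : ℕ} (f : Pt n → Pt n) (J : Pt n → ℝ) : Prop :=
  (∀ᵐ x ∂(volume : Measure (Pt n)), ∃ D : Pt n →L[ℝ] Pt n,
      HasFDerivAt f D x ∧ J x = |D.det|) ∧
  ∀ g : Pt n → ℝ≥0∞, Measurable g →
    ∫⁻ x, g (f x) * ENNReal.ofReal (J x) = ∫⁻ y, g y

/-- The hyperplane `ℝ^{n-1} × {0}` (the last coordinate vanishes). -/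
def Hset (n : ℕ) : Set (Pt n) := {x | ∀ i : Fin n, (i : ℕ) = n - 1 → x i = 0}

/-- The open upper half-space (last coordinate positive). -/
def upperHalf (n : ℕ) : Set (Pt n) := {x | ∀ i : Fin n, (i : ℕ) = n - 1 → 0 < x i}

/-- The open lower half-space (last coordinate negative). -/
def lowerHalf (n : ℕ) : Set (Pt n) := {x | ∀ i : Fin n, (i : ℕ) = n - 1 → x i < 0}

/-- The hyperbolic length `∫₀¹ |γ'(t)|/dist(γ(t),H) dt` of a curve `γ`. -/
def hypLen {n : ℕ} (H : Set (Pt n)) (γ : ℝ → Pt n) : ℝ :=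
  ∫ t in (0:ℝ)..1, ‖deriv γ t‖ / Metric.infDist (γ t) H

/-- The hyperbolic-type distance associated with the set `H`: the infimum of hyperbolic
lengths of differentiable curves joining `z` and `w` in the complement of `H`. -/
def hypDist {n : ℕ} (H : Set (Pt n)) (z w : Pt n) : ℝ :=
  sInf {L : ℝ | ∃ γ : ℝ → Pt n, γ 0 = z ∧ γ 1 = w ∧
    (∀ t ∈ Icc (0:ℝ) 1, DifferentiableAt ℝ γ t ∧ γ t ∉ H) ∧ L = hypLen H γ}

/-- `L_f(z,t) = sup { |f(z)-f(w)| : |z-w| ≤ t }`. -/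
def Lf {n : ℕ} (f : Pt n → Pt n) (z : Pt n) (t : ℝ) : ℝ :=
  sSup ((fun w => dist (f z) (f w)) '' closedBall z t)

/-!
`Φ ≲ Ψ`. At a point `x` of approximate continuity, the constants `c k` realising the `L^q` mean
oscillations over the balls `ball x (r / 2 ^ k)` converge to `u x` as soon as these oscillations
tend to zero. Summing the differences of consecutive constants with weights `t ^ k`, `t = 2 ^ α`,
bounds `t ^ k * |c k - u x| ^ 2` by a tail of `∑ t ^ j * osc_j(x) ^ 2`. If `|x - y| < r / 2 ^ k`,
then `c k` for `x` and for `y` are compared on the ball of half the radius about the midpoint, which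
lies in both balls. This bounds `t ^ k * |u x - u y| ^ 2` by the tails at `x` and `y`; integrating
over the dyadic shells `|x - y| ≈ r / 2 ^ k` and exchanging the sums produces the weights
`t ^ (2 * j)` of `Ψ`.

`Ψ ≲ Φ`. Since `q ≤ 2`, an `L^q` oscillation is at most the `L²` one, and its infimum over constants
is at most the average over the constants `u w` with `w` in the same ball. By Tonelli the centre of
the ball integrates out, and the resulting kernels `ρ ^ (-(n + 2 * α)) * 1_{|z - w| < 2 * ρ}`, with
`ρ = r / 2 ^ k`, sum geometrically to a multiple of `|z - w| ^ (-(n + 2 * α))`.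
-/

open ProbabilityTheory
open scoped Topology

/-! ### Weighted sums and telescoping -/

theorem add_sq_le_inv_mul_sq_add_inv_mul_sq {w₁ w₂ : ℝ≥0∞} (hw : w₁ + w₂ = 1) (hw₁ : w₁ ≠ 0)
    (hw₂ : w₂ ≠ 0) (a b : ℝ≥0∞) : (a + b) ^ 2 ≤ w₁⁻¹ * a ^ 2 + w₂⁻¹ * b ^ 2 := by
  have hw₁' : w₁ ≠ ∞ := ne_top_of_le_ne_top one_ne_top (hw ▸ le_self_add)
  have hw₂' : w₂ ≠ ∞ := ne_top_of_le_ne_top one_ne_top (hw ▸ le_add_self)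
  have mul_inv_sq {w : ℝ≥0∞} (h0 : w ≠ 0) (h1 : w ≠ ∞) (x : ℝ≥0∞) :
      w * (w⁻¹ * x) ^ 2 = w⁻¹ * x ^ 2 := by
    rw [mul_pow, sq w⁻¹, ← mul_assoc, ← mul_assoc, ENNReal.mul_inv_cancel h0 h1, one_mul]
  have h := ENNReal.rpow_arith_mean_le_arith_mean2_rpow w₁ w₂ (w₁⁻¹ * a) (w₂⁻¹ * b) hw
    (p := 2) (by norm_num)
  simp only [ENNReal.rpow_two, mul_inv_sq hw₁ hw₁', mul_inv_sq hw₂ hw₂'] at h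
  rwa [← mul_assoc, ← mul_assoc, ENNReal.mul_inv_cancel hw₁ hw₁', ENNReal.mul_inv_cancel hw₂ hw₂',
    one_mul, one_mul] at h

theorem add_sq_le_two_mul_add_sq (a b : ℝ≥0∞) : (a + b) ^ 2 ≤ 2 * (a ^ 2 + b ^ 2) := by
  simpa [mul_add] using add_sq_le_inv_mul_sq_add_inv_mul_sq ENNReal.inv_two_add_inv_two
    (by simp) (by simp) a b

theorem sum_range_succ_le_of_le_mul_succ {s : ℝ≥0∞} {a : ℕ → ℝ≥0∞} (hs : s < 1)
    (ha : ∀ k, a k ≤ s * a (k + 1)) (m : ℕ) :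
    ∑ k ∈ Finset.range (m + 1), a k ≤ (1 - s)⁻¹ * a m := by
  have hs' : (1 - s)⁻¹ * s + 1 = (1 - s)⁻¹ := by
    nth_rw 2 [← ENNReal.inv_mul_cancel (tsub_pos_of_lt hs).ne' (by finiteness)]
    rw [← mul_add, add_tsub_cancel_of_le hs.le, mul_one]
  induction m with
  | zero => simpa using mul_le_mul_left (hs' ▸ le_add_self : (1 : ℝ≥0∞) ≤ (1 - s)⁻¹) (a 0)
  | succ m ih =>
    calc ∑ k ∈ Finset.range (m + 1 + 1), a k
        ≤ (1 - s)⁻¹ * (s * a (m + 1)) + a (m + 1) := by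
          rw [Finset.sum_range_succ]
          gcongr
          exact ih.trans (mul_le_mul_right (ha m) _)
      _ = ((1 - s)⁻¹ * s + 1) * a (m + 1) := by ring
      _ = (1 - s)⁻¹ * a (m + 1) := by rw [hs']

theorem tsum_ite_le_of_le_mul_succ {s X : ℝ≥0∞} {a : ℕ → ℝ≥0∞} (hs : s < 1)
    (ha : ∀ k, a k ≤ s * a (k + 1)) {P : ℕ → Prop} [DecidablePred P] (hP : ∀ k, P k → a k ≤ X) :
    ∑' k, (if P k then a k else 0) ≤ (1 - s)⁻¹ * X := by
  refine ENNReal.tsum_le_of_sum_range_le fun m => ?_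
  induction m with
  | zero => simp
  | succ m ih =>
    by_cases hm : P m
    · calc ∑ k ∈ Finset.range (m + 1), (if P k then a k else 0)
          ≤ ∑ k ∈ Finset.range (m + 1), a k :=
            Finset.sum_le_sum fun k _ => by split_ifs <;> simp
        _ ≤ (1 - s)⁻¹ * a m := sum_range_succ_le_of_le_mul_succ hs ha m
        _ ≤ (1 - s)⁻¹ * X := by gcongr; exact hP m hm
    · simpa [Finset.sum_range_succ, hm] using ih

theorem inv_one_sub_inv_ne_top {t : ℝ≥0∞} (ht : 1 < t) : (1 - t⁻¹)⁻¹ ≠ ∞ :=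
  ENNReal.inv_ne_top.2 (tsub_pos_of_lt (ENNReal.inv_lt_one.2 ht)).ne'

theorem edist_sq_le_of_edist_sq {X : Type*} [PseudoEMetricSpace X] (x y x' y' : X) :
    edist x y ^ 2 ≤ 2 * (edist x' y' ^ 2 + 2 * (edist x' x ^ 2 + edist y' y ^ 2)) :=
  calc edist x y ^ 2 ≤ (edist x' y' + (edist x' x + edist y' y)) ^ 2 := by
        gcongr
        rw [← add_assoc, add_comm (edist x' y'), edist_comm x' x]
        exact edist_triangle4 _ _ _ _
    _ ≤ _ := by grw [add_sq_le_two_mul_add_sq, add_sq_le_two_mul_add_sq (edist x' x)]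

/-- The tail `∑_{j ≥ k} tʲ aⱼ`, written with the index `j = k + i`. It is applied to the squared
oscillations `aⱼ` of a function at the scales `r / 2 ^ j`. -/
def weightedTail (t : ℝ≥0∞) (a : ℕ → ℝ≥0∞) (k : ℕ) : ℝ≥0∞ :=
  ∑' i, t ^ (k + i) * a (k + i)

theorem pow_mul_le_weightedTail (t : ℝ≥0∞) (a : ℕ → ℝ≥0∞) (k : ℕ) :
    t ^ k * a k ≤ weightedTail t a k :=
  ENNReal.le_tsum 0

theorem tsum_pow_mul_succ_le_weightedTail {t : ℝ≥0∞} (ht : 1 ≤ t) (a : ℕ → ℝ≥0∞) (k : ℕ) :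
    ∑' i, t ^ (k + i) * a (k + i + 1) ≤ weightedTail t a k :=
  calc ∑' i, t ^ (k + i) * a (k + i + 1)
      ≤ ∑' i, t ^ (k + (i + 1)) * a (k + (i + 1)) := by
        simp only [← add_assoc]
        exact ENNReal.tsum_le_tsum fun i => mul_le_mul_left (pow_le_pow_right₀ ht (k + i).le_succ) _
    _ ≤ weightedTail t a k :=
        ENNReal.tsum_comp_le_tsum_of_injective (add_left_injective 1)
          fun i => t ^ (k + i) * a (k + i)

theorem tendsto_zero_of_weightedTail_ne_top {t : ℝ≥0∞} (ht : 1 ≤ t) {a : ℕ → ℝ≥0∞} {k : ℕ}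
    (h : weightedTail t a k ≠ ∞) : Tendsto a atTop (𝓝 0) := by
  refine (tendsto_add_atTop_iff_nat k).1 (tendsto_of_tendsto_of_tendsto_of_le_of_le
    tendsto_const_nhds (ENNReal.tendsto_atTop_zero_of_tsum_ne_top h) (fun _ => zero_le) fun i => ?_)
  rw [add_comm]
  exact le_mul_of_one_le_left (zero_le) (one_le_pow₀ ht)

theorem tsum_pow_mul_weightedTail_le {t : ℝ≥0∞} (ht : 1 ≤ t) (ht' : t ≠ ∞) (a : ℕ → ℝ≥0∞) :
    ∑' k, t ^ k * weightedTail t a k ≤ (1 - t⁻¹)⁻¹ * ∑' j, t ^ (2 * j) * a j := by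
  have ht0 : t ≠ 0 := (zero_lt_one.trans_le ht).ne'
  have weight (k i : ℕ) : t ^ k * (t ^ (k + i) * a (k + i)) =
      t⁻¹ ^ i * (t ^ (2 * (k + i)) * a (k + i)) := by
    have : t⁻¹ ^ i * t ^ i = 1 := by rw [← mul_pow, ENNReal.inv_mul_cancel ht0 ht', one_pow]
    calc _ = (t⁻¹ ^ i * t ^ i) * (t ^ k * (t ^ (k + i) * a (k + i))) := by rw [this, one_mul]
      _ = _ := by ring
  calc ∑' k, t ^ k * weightedTail t a k
      = ∑' i, t⁻¹ ^ i * ∑' k, t ^ (2 * (k + i)) * a (k + i) := by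
        simp only [weightedTail, ← ENNReal.tsum_mul_left, weight]
        exact ENNReal.tsum_comm
    _ ≤ ∑' i, t⁻¹ ^ i * ∑' j, t ^ (2 * j) * a j := by
        refine ENNReal.tsum_le_tsum fun i => mul_le_mul_right ?_ _
        exact ENNReal.tsum_comp_le_tsum_of_injective (add_left_injective i)
          fun j => t ^ (2 * j) * a j
    _ = _ := by rw [ENNReal.tsum_mul_right, ENNReal.tsum_geometric]

theorem measurable_weightedTail {X : Type*} [MeasurableSpace X] (t : ℝ≥0∞) {f : X → ℕ → ℝ≥0∞}
    (hf : ∀ j, Measurable fun x => f x j) (k : ℕ) : Measurable fun x => weightedTail t (f x) k :=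
  .tsum fun i => (hf (k + i)).const_mul _

theorem tsum_pow_mul_lintegral_weightedTail_le {X : Type*} [MeasurableSpace X] {ν : Measure X}
    {t : ℝ≥0∞} (ht : 1 ≤ t) (ht' : t ≠ ∞) {f : X → ℕ → ℝ≥0∞} (hf : ∀ j, Measurable fun x => f x j) :
    ∑' k, t ^ k * ∫⁻ x, weightedTail t (f x) k ∂ν ≤
      (1 - t⁻¹)⁻¹ * ∑' j, t ^ (2 * j) * ∫⁻ x, f x j ∂ν :=
  calc ∑' k, t ^ k * ∫⁻ x, weightedTail t (f x) k ∂ν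
      = ∫⁻ x, ∑' k, t ^ k * weightedTail t (f x) k ∂ν := by
        have htail := measurable_weightedTail t hf
        rw [lintegral_tsum fun k => ((htail k).const_mul _).aemeasurable]
        simp only [lintegral_const_mul _ (htail _)]
    _ ≤ ∫⁻ x, (1 - t⁻¹)⁻¹ * ∑' j, t ^ (2 * j) * f x j ∂ν :=
        lintegral_mono fun x => tsum_pow_mul_weightedTail_le ht ht' (f x)
    _ = _ := by
        rw [lintegral_const_mul _ (.tsum fun j => (hf j).const_mul _),
          lintegral_tsum fun j => ((hf j).const_mul _).aemeasurable]
        simp only [lintegral_const_mul _ (hf _)]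

theorem pow_mul_edist_sq_le_sum {X : Type*} [PseudoEMetricSpace X] {t : ℝ≥0∞} (ht : 1 < t)
    (ht' : t ≠ ∞) (c : ℕ → X) (k m : ℕ) :
    t ^ k * edist (c k) (c (k + m)) ^ 2 ≤
      (1 - t⁻¹)⁻¹ * ∑ i ∈ Finset.range m, t ^ (k + i) * edist (c (k + i)) (c (k + i + 1)) ^ 2 := by
  induction m generalizing k with
  | zero => simp
  | succ m ih =>
    have hinv : t⁻¹ < 1 := ENNReal.inv_lt_one.2 ht
    have step : edist (c k) (c (k + (m + 1))) ^ 2 ≤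
        (1 - t⁻¹)⁻¹ * edist (c k) (c (k + 1)) ^ 2 + t * edist (c (k + 1)) (c (k + 1 + m)) ^ 2 := by
      have h := add_sq_le_inv_mul_sq_add_inv_mul_sq (tsub_add_cancel_of_le hinv.le)
        (tsub_pos_of_lt hinv).ne' (ENNReal.inv_ne_zero.2 ht')
        (edist (c k) (c (k + 1))) (edist (c (k + 1)) (c (k + 1 + m)))
      rw [inv_inv] at h
      refine le_trans ?_ h
      rw [add_comm m 1, ← add_assoc]
      gcongr
      exact edist_triangle _ _ _
    calc t ^ k * edist (c k) (c (k + (m + 1))) ^ 2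
        ≤ t ^ k * ((1 - t⁻¹)⁻¹ * edist (c k) (c (k + 1)) ^ 2 +
            t * edist (c (k + 1)) (c (k + 1 + m)) ^ 2) := by gcongr
      _ = (1 - t⁻¹)⁻¹ * (t ^ k * edist (c k) (c (k + 1)) ^ 2) +
            t ^ (k + 1) * edist (c (k + 1)) (c (k + 1 + m)) ^ 2 := by ring
      _ ≤ (1 - t⁻¹)⁻¹ * (t ^ k * edist (c k) (c (k + 1)) ^ 2) + (1 - t⁻¹)⁻¹ *
            ∑ i ∈ Finset.range m, t ^ (k + 1 + i) *
              edist (c (k + 1 + i)) (c (k + 1 + i + 1)) ^ 2 :=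
          add_le_add_right (ih (k + 1)) _
      _ = _ := by
        rw [Finset.sum_range_succ', mul_add, add_comm]
        simp only [add_right_comm _ 1, add_zero, ← add_assoc]

theorem pow_mul_edist_sq_le_tsum {X : Type*} [PseudoEMetricSpace X] {t : ℝ≥0∞} (ht : 1 < t)
    (ht' : t ≠ ∞) {c : ℕ → X} {a : X} (hc : Tendsto c atTop (𝓝 a)) (k : ℕ) :
    t ^ k * edist (c k) a ^ 2 ≤
      (1 - t⁻¹)⁻¹ * ∑' i, t ^ (k + i) * edist (c (k + i)) (c (k + i + 1)) ^ 2 := by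
  have hlim : Tendsto (fun m => t ^ k * edist (c k) (c (k + m)) ^ 2) atTop
      (𝓝 (t ^ k * edist (c k) a ^ 2)) :=
    ENNReal.Tendsto.const_mul (ENNReal.Tendsto.pow
      (tendsto_const_nhds.edist (hc.comp (tendsto_add_atTop_nat k |>.congr fun _ => add_comm _ _))))
      (.inr (pow_ne_top ht'))
  refine le_of_tendsto' hlim fun m => (pow_mul_edist_sq_le_sum ht ht' c k m).trans ?_
  gcongr
  exact ENNReal.sum_le_tsum _

theorem pow_mul_edist_sq_le_weightedTail {X : Type*} [PseudoEMetricSpace X] {t : ℝ≥0∞} (ht : 1 < t)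
    (ht' : t ≠ ∞) {c : ℕ → X} {a : X} (hc : Tendsto c atTop (𝓝 a)) {K : ℝ≥0∞} {o : ℕ → ℝ≥0∞}
    (ho : ∀ j, edist (c j) (c (j + 1)) ≤ K * (o j + o (j + 1))) (k : ℕ) :
    t ^ k * edist (c k) a ^ 2 ≤
      4 * K ^ 2 * (1 - t⁻¹)⁻¹ * weightedTail t (fun j => o j ^ 2) k := by
  have step (j : ℕ) : t ^ j * edist (c j) (c (j + 1)) ^ 2 ≤
      2 * K ^ 2 * (t ^ j * o j ^ 2 + t ^ j * o (j + 1) ^ 2) :=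
    calc t ^ j * edist (c j) (c (j + 1)) ^ 2
        ≤ t ^ j * (K ^ 2 * (2 * (o j ^ 2 + o (j + 1) ^ 2))) := by
          grw [ho j, mul_pow, add_sq_le_two_mul_add_sq]
      _ = _ := by ring
  calc t ^ k * edist (c k) a ^ 2
      ≤ (1 - t⁻¹)⁻¹ * ∑' i, 2 * K ^ 2 *
          (t ^ (k + i) * o (k + i) ^ 2 + t ^ (k + i) * o (k + i + 1) ^ 2) := by
        grw [pow_mul_edist_sq_le_tsum ht ht' hc k]
        exact mul_le_mul_right (ENNReal.tsum_le_tsum fun i => step (k + i)) _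
    _ = (1 - t⁻¹)⁻¹ * (2 * K ^ 2 * (weightedTail t (fun j => o j ^ 2) k +
          ∑' i, t ^ (k + i) * o (k + i + 1) ^ 2)) := by
        rw [ENNReal.tsum_mul_left, ENNReal.tsum_add, weightedTail]
    _ ≤ (1 - t⁻¹)⁻¹ * (2 * K ^ 2 * (weightedTail t (fun j => o j ^ 2) k +
          weightedTail t (fun j => o j ^ 2) k)) := by
        grw [tsum_pow_mul_succ_le_weightedTail ht.le fun j => o j ^ 2]
    _ = _ := by ring

/-! ### Approximation by constants -/

section ConstantApproximation

variable {Ω F : Type*} [MeasurableSpace Ω] {ν : Measure Ω} [NormedAddCommGroup F] {u : Ω → F}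
  {p : ℝ≥0∞}

theorem memLp_sub_const_iff [IsFiniteMeasure ν] (c : F) :
    MemLp (fun z => u z - c) p ν ↔ MemLp u p ν :=
  ⟨fun h => by simpa [Pi.add_def] using h.add (memLp_const c), fun h => h.sub (memLp_const c)⟩

theorem eLpNorm_sub_const_eq_top [IsFiniteMeasure ν] (hu : AEStronglyMeasurable u ν)
    (h : ¬ MemLp u p ν) (c : F) : eLpNorm (fun z => u z - c) p ν = ∞ := by
  by_contra hc
  exact h ((memLp_sub_const_iff c).1 ⟨hu.sub aestronglyMeasurable_const, Ne.lt_top hc⟩)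

theorem continuous_eLpNorm_sub_const [IsFiniteMeasure ν] (hu : AEStronglyMeasurable u ν)
    (hp : p ≠ ∞) : Continuous fun c => eLpNorm (fun z => u z - c) p ν := by
  by_cases h : MemLp u p ν
  swap
  · simpa only [eLpNorm_sub_const_eq_top hu h] using continuous_const
  rcases eq_or_ne p 0 with rfl | hp0
  · simpa only [eLpNorm_exponent_zero] using continuous_const
  simp only [eLpNorm_eq_lintegral_rpow_enorm_toReal hp0 hp]
  refine (ENNReal.continuous_rpow_const).comp (continuous_iff_continuousAt.2 fun c => ?_)
  have hdom : MemLp (fun z => ‖u z - c‖ + 1) p ν :=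
    ((memLp_sub_const_iff c).2 h).norm.add (memLp_const 1)
  refine tendsto_lintegral_filter_of_dominated_convergence'
    (fun z => ‖‖u z - c‖ + 1‖ₑ ^ p.toReal) (.of_forall fun c' => ?_) ?_
    (lintegral_rpow_enorm_lt_top_of_eLpNorm_lt_top hp0 hp hdom.2).ne
    (.of_forall fun z => ?_)
  · exact (hu.sub aestronglyMeasurable_const).enorm.pow_const _
  · filter_upwards [closedBall_mem_nhds c one_pos] with c' hc'
    refine .of_forall fun z => ?_
    gcongr
    rw [enorm_le_iff_norm_le, Real.norm_of_nonneg (by positivity)]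
    calc ‖u z - c'‖ = ‖(u z - c) + (c - c')‖ := by rw [sub_add_sub_cancel]
      _ ≤ ‖u z - c‖ + 1 := (norm_add_le _ _).trans (by gcongr; simpa [dist_eq_norm'] using hc')
  · exact ((ENNReal.continuous_rpow_const).comp (by fun_prop)).tendsto c

theorem iInf_mem_eLpNorm_sub_const [IsFiniteMeasure ν] (hu : AEStronglyMeasurable u ν)
    (hp : p ≠ ∞) {s : Set F} (hs : Dense s) :
    ⨅ c : s, eLpNorm (fun z => u z - c) p ν = ⨅ c, eLpNorm (fun z => u z - c) p ν :=
  hs.ciInf' (continuous_eLpNorm_sub_const hu hp)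

theorem edist_le_of_measure_le_smul {ν₁ ν₂ : Measure Ω} [IsProbabilityMeasure ν]
    (hu : AEStronglyMeasurable u ν) (hp0 : p ≠ 0) {A : ℝ≥0∞} (hA : A ≠ 0)
    (h₁ : ν ≤ A • ν₁) (h₂ : ν ≤ A • ν₂) (c₁ c₂ : F) :
    edist c₁ c₂ ≤ LpAddConst p * A ^ p.toReal⁻¹ *
      (eLpNorm (fun z => u z - c₁) p ν₁ + eLpNorm (fun z => u z - c₂) p ν₂) := by
  have mono {ν' : Measure Ω} (h : ν ≤ A • ν') (c : F) : eLpNorm (fun z => u z - c) p ν ≤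
      A ^ p.toReal⁻¹ * eLpNorm (fun z => u z - c) p ν' := by
    refine (eLpNorm_mono_measure _ h).trans_eq ?_
    rw [eLpNorm_smul_measure_of_ne_zero hA, smul_eq_mul, one_div, ENNReal.toReal_inv]
  calc edist c₁ c₂ = eLpNorm ((fun z => u z - c₂) - fun z => u z - c₁) p ν := by
        simp [Pi.sub_def, edist_eq_enorm_sub, eLpNorm_const _ hp0 (IsProbabilityMeasure.ne_zero ν)]
    _ ≤ LpAddConst p *
          (eLpNorm (fun z => u z - c₂) p ν + eLpNorm (fun z => u z - c₁) p ν) :=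
        eLpNorm_sub_le' (hu.sub aestronglyMeasurable_const) (hu.sub aestronglyMeasurable_const) p
    _ ≤ LpAddConst p * (A ^ p.toReal⁻¹ * eLpNorm (fun z => u z - c₂) p ν₂ +
          A ^ p.toReal⁻¹ * eLpNorm (fun z => u z - c₁) p ν₁) := by
        gcongr <;> exact mono ‹_› _
    _ = _ := by ring

theorem exists_forall_eLpNorm_sub_const_le [ProperSpace F] [IsProbabilityMeasure ν]
    (hu : AEStronglyMeasurable u ν) (hp0 : p ≠ 0) (hp : p ≠ ∞) :
    ∃ c, ∀ c', eLpNorm (fun z => u z - c) p ν ≤ eLpNorm (fun z => u z - c') p ν := by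
  by_cases h : MemLp u p ν
  swap
  · exact ⟨0, fun c' => by simp only [eLpNorm_sub_const_eq_top hu h, le_rfl]⟩
  set g : F → ℝ≥0∞ := fun c => eLpNorm (fun z => u z - c) p ν
  have hg : g 0 ≠ ∞ := ((memLp_sub_const_iff 0).2 h).eLpNorm_ne_top
  set R : ℝ≥0∞ := LpAddConst p * 1 ^ p.toReal⁻¹ * (g 0 + g 0)
  have hR : R ≠ ∞ := by
    simpa [R] using ENNReal.mul_ne_top (LpAddConst_lt_top p).ne (add_ne_top.2 ⟨hg, hg⟩)
  have hsub : {c | g c ≤ g 0} ⊆ closedBall 0 R.toReal := fun c (hc : g c ≤ g 0) => by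
    rw [mem_closedBall, dist_edist]
    refine ENNReal.toReal_mono hR ((edist_le_of_measure_le_smul hu hp0 one_ne_zero
      (one_smul _ ν).ge (one_smul _ ν).ge c 0).trans ?_)
    exact mul_le_mul_right (add_le_add_left hc _) _
  exact (continuous_eLpNorm_sub_const hu hp).exists_forall_le_of_isBounded 0
    (isBounded_closedBall.subset hsub)

end ConstantApproximation

/-! ### Approximate continuity -/

section ApproximateContinuity

variable {X F : Type*} [PseudoMetricSpace X] [MeasurableSpace X]

/-- `u` is approximately continuous at `x`: the preimage of every neighbourhood of `u x` has density
one at `x`. Densities are conditional probabilities given the ball `ball x ρ`, as `ρ → 0⁺`. -/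
def ApproxContinuousAt [TopologicalSpace F] (μ : Measure X) (u : X → F) (x : X) : Prop :=
  ∀ V ∈ 𝓝 (u x), Tendsto (fun ρ => μ[|ball x ρ] (u ⁻¹' V)) (𝓝[>] 0) (𝓝 1)

theorem ApproxContinuousAt.tendsto_of_eLpNorm [NormedAddCommGroup F] {μ : Measure X} {u : X → F}
    {x : X} (hux : ApproxContinuousAt μ u x) (hu : AEStronglyMeasurable u μ) {p : ℝ≥0∞}
    (hp0 : p ≠ 0) (hp : p ≠ ∞) {ρ : ℕ → ℝ} (hρ : Tendsto ρ atTop (𝓝[>] 0)) {c : ℕ → F}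
    (hc : Tendsto (fun j => eLpNorm (fun z => u z - c j) p μ[|ball x (ρ j)]) atTop (𝓝 0)) :
    Tendsto c atTop (𝓝 (u x)) := by
  refine EMetric.tendsto_nhds.2 fun ε hε => ?_
  set δ := min (ε / 2) 1
  have hδ0 : δ ≠ 0 := (lt_min (ENNReal.half_pos hε.ne') one_pos).ne'
  have hδ : δ ≠ ∞ := ne_top_of_le_ne_top one_ne_top (min_le_right _ _)
  have hp' : 0 < p.toReal := ENNReal.toReal_pos hp0 hp
  have hnear : Tendsto (fun j => δ ^ p.toReal * μ[|ball x (ρ j)] (u ⁻¹' eball (u x) δ)) atTop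
      (𝓝 (δ ^ p.toReal)) := by
    simpa using ENNReal.Tendsto.const_mul
      ((hux _ (eball_mem_nhds _ (pos_iff_ne_zero.2 hδ0))).comp hρ)
      (.inr (ENNReal.rpow_ne_top_of_nonneg hp'.le hδ))
  have hfar : Tendsto (fun j => eLpNorm (fun z => u z - c j) p μ[|ball x (ρ j)] ^ p.toReal) atTop
      (𝓝 0) := by
    simpa [ENNReal.zero_rpow_of_pos hp'] using hc.ennrpow_const p.toReal
  filter_upwards [hfar.eventually_lt hnear (ENNReal.rpow_pos (pos_iff_ne_zero.2 hδ0) hδ)] with j hj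
  have hmarkov := mul_meas_ge_le_pow_eLpNorm' (μ := μ[|ball x (ρ j)]) hp0 hp
    ((hu.mono_ac cond_absolutelyContinuous).sub (aestronglyMeasurable_const (b := c j))) δ
  obtain ⟨z, hz, hzc⟩ : ∃ z, edist (u z) (u x) < δ ∧ edist (u z) (c j) < δ := by
    by_contra! hsub
    refine hj.not_ge (le_trans ?_ hmarkov)
    gcongr
    exact fun z hz => (hsub z hz).trans_eq (edist_eq_enorm_sub _ _)
  calc edist (c j) (u x) ≤ edist (u z) (c j) + edist (u z) (u x) := edist_triangle_left _ _ _
    _ < δ + δ := ENNReal.add_lt_add hzc hz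
    _ ≤ ε / 2 + ε / 2 := add_le_add (min_le_left _ _) (min_le_left _ _)
    _ = ε := ENNReal.add_halves ε

end ApproximateContinuity

theorem isProbabilityMeasure_cond_ball {X : Type*} [PseudoMetricSpace X] [ProperSpace X]
    [MeasurableSpace X] {μ : Measure X} [μ.IsOpenPosMeasure] [IsFiniteMeasureOnCompacts μ] (x : X)
    {ρ : ℝ} (hρ : 0 < ρ) : IsProbabilityMeasure μ[|ball x ρ] :=
  cond_isProbabilityMeasure_of_finite (measure_ball_pos μ x hρ).ne' measure_ball_lt_top.ne

section Haar

variable {E : Type*} [NormedAddCommGroup E] [NormedSpace ℝ E] [FiniteDimensional ℝ E]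
  [MeasurableSpace E] [BorelSpace E] {μ : Measure E} [μ.IsAddHaarMeasure]

theorem cond_closedBall_eq_cond_ball (x : E) {ρ : ℝ} (hρ : ρ ≠ 0) :
    μ[|closedBall x ρ] = μ[|ball x ρ] := by
  have h : (closedBall x ρ : Set E) =ᵐ[μ] ball x ρ := by
    rw [← ball_union_sphere]
    exact union_ae_eq_left_of_ae_eq_empty (ae_eq_empty.2 (Measure.addHaar_sphere_of_ne_zero μ x hρ))
  rw [ProbabilityTheory.cond, ProbabilityTheory.cond, measure_congr h, Measure.restrict_congr_set h]

theorem ae_approxContinuousAt {F : Type*} [TopologicalSpace F] [SecondCountableTopology F]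
    (u : E → F) : ∀ᵐ x ∂μ, ApproxContinuousAt μ u x := by
  have hbasis := TopologicalSpace.isBasis_countableBasis F
  have hdensity : ∀ᵐ x ∂μ, ∀ V ∈ TopologicalSpace.countableBasis F, x ∈ u ⁻¹' V →
      Tendsto (fun ρ => μ[|ball x ρ] (u ⁻¹' V)) (𝓝[>] 0) (𝓝 1) := by
    refine (ae_ball_iff (TopologicalSpace.countable_countableBasis F)).2 fun V _ => ?_
    filter_upwards [ae_imp_of_ae_restrict (Besicovitch.ae_tendsto_measure_inter_div μ (u ⁻¹' V))]
      with x hx hxV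
    refine (hx hxV).congr' ?_
    filter_upwards [self_mem_nhdsWithin] with ρ hρ
    rw [← cond_closedBall_eq_cond_ball x (ne_of_gt hρ), cond_apply measurableSet_closedBall,
      inter_comm, ENNReal.div_eq_inv_mul]
  filter_upwards [hdensity] with x hx V hV
  obtain ⟨W, hW, hxW, hWV⟩ := hbasis.mem_nhds_iff.1 hV
  refine tendsto_of_tendsto_of_tendsto_of_le_of_le' (hx W hW hxW) tendsto_const_nhds
    (.of_forall fun ρ => by gcongr) ?_
  filter_upwards [self_mem_nhdsWithin] with ρ hρ
  have := isProbabilityMeasure_cond_ball (μ := μ) x hρ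
  exact prob_le_one

end Haar

/-! ### Mean oscillation -/

/-- The `Lᵖ` mean oscillation of `u` over `ball x ρ`: the infimum over constants `c` of the `Lᵖ`
norm of `u - c` with respect to the normalised measure on the ball. -/
def lpOsc {X F : Type*} [PseudoMetricSpace X] [MeasurableSpace X] [NormedAddCommGroup F] (p : ℝ≥0∞)
    (μ : Measure X) (u : X → F) (x : X) (ρ : ℝ) : ℝ≥0∞ :=
  ⨅ c : F, eLpNorm (fun z => u z - c) p μ[|ball x ρ]

theorem cond_le_smul_cond {Ω : Type*} [MeasurableSpace Ω] {μ : Measure Ω} {s t : Set Ω}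
    (hst : s ⊆ t) {A : ℝ≥0∞} (hA0 : A ≠ 0) (hA : A ≠ ∞) (h : μ t ≤ A * μ s) :
    μ[|s] ≤ A • μ[|t] := by
  have hinv : (μ s)⁻¹ ≤ A * (μ t)⁻¹ :=
    calc (μ s)⁻¹ = A * (A * μ s)⁻¹ := by
          rw [ENNReal.mul_inv (.inl hA0) (.inl hA), ← mul_assoc, ENNReal.mul_inv_cancel hA0 hA,
            one_mul]
      _ ≤ A * (μ t)⁻¹ := by gcongr
  refine Measure.le_iff'.2 fun v => ?_
  simp only [ProbabilityTheory.cond, Measure.smul_apply, smul_eq_mul, ← mul_assoc]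
  gcongr

section LpOsc

variable {X F : Type*} [PseudoMetricSpace X] [MeasurableSpace X] [NormedAddCommGroup F]
  {p : ℝ≥0∞} {μ : Measure X} {u : X → F}

theorem exists_eLpNorm_sub_const_eq_lpOsc [ProperSpace F] {x : X} {ρ : ℝ}
    [IsProbabilityMeasure μ[|ball x ρ]] (hu : AEStronglyMeasurable u μ) (hp0 : p ≠ 0) (hp : p ≠ ∞) :
    ∃ c, eLpNorm (fun z => u z - c) p μ[|ball x ρ] = lpOsc p μ u x ρ := by
  obtain ⟨c, hc⟩ := exists_forall_eLpNorm_sub_const_le (ν := μ[|ball x ρ])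
    (hu.mono_ac cond_absolutelyContinuous) hp0 hp
  exact ⟨c, le_antisymm (le_iInf hc) (iInf_le _ c)⟩

variable [SecondCountableTopology X] [OpensMeasurableSpace X] [SFinite μ]

theorem measurable_setLIntegral_ball {f : X → ℝ≥0∞} (hf : AEMeasurable f μ) (ρ : ℝ) :
    Measurable fun x => ∫⁻ z in ball x ρ, f z ∂μ := by
  have hmeas : Measurable fun q : X × X => {q : X × X | dist q.2 q.1 < ρ}.indicator
      (fun q => hf.mk f q.2) q :=
    (hf.measurable_mk.comp measurable_snd).indicator
      (isOpen_lt (by fun_prop) continuous_const).measurableSet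
  have heq (x : X) : ∫⁻ z in ball x ρ, f z ∂μ =
      ∫⁻ z, {q : X × X | dist q.2 q.1 < ρ}.indicator (fun q => hf.mk f q.2) (x, z) ∂μ := by
    rw [lintegral_congr_ae (ae_restrict_of_ae hf.ae_eq_mk),
      ← lintegral_indicator measurableSet_ball]
    rfl
  simpa only [heq] using hmeas.lintegral_prod_right'

theorem measurable_lpOsc [TopologicalSpace.SeparableSpace F] (hu : AEStronglyMeasurable u μ)
    (hp0 : p ≠ 0) (hp : p ≠ ∞) (ρ : ℝ) : Measurable fun x => lpOsc p μ u x ρ := by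
  obtain ⟨s, hs, hsd⟩ := TopologicalSpace.exists_countable_dense F
  have := hs.to_subtype
  have heq : (fun x => lpOsc p μ u x ρ) = fun x => ⨅ c : s,
      ((μ (ball x ρ))⁻¹ * ∫⁻ z in ball x ρ, ‖u z - c‖ₑ ^ p.toReal ∂μ) ^ p.toReal⁻¹ := by
    funext x
    rw [lpOsc, ← iInf_mem_eLpNorm_sub_const (hu.mono_ac cond_absolutelyContinuous) hp hsd]
    simp [eLpNorm_eq_lintegral_rpow_enorm_toReal hp0 hp, ProbabilityTheory.cond]
  rw [heq]
  refine .iInf fun c => .pow_const (.mul ?_ ?_) _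
  · have hball := measurable_setLIntegral_ball (μ := μ) (f := 1) aemeasurable_const ρ
    simp only [Pi.one_apply, setLIntegral_one] at hball
    exact hball.inv
  · exact measurable_setLIntegral_ball
      ((hu.sub aestronglyMeasurable_const).enorm.pow_const _) ρ

end LpOsc

section DyadicChain

variable {E F : Type*} [NormedAddCommGroup E] [NormedSpace ℝ E] [FiniteDimensional ℝ E]
  [MeasurableSpace E] [BorelSpace E] [NormedAddCommGroup F] {μ : Measure E} [μ.IsAddHaarMeasure]
  {p : ℝ≥0∞} {u : E → F}

/-- The constant in `edist_le_of_ball_subset`, where `d` is the dimension: the quasi-triangle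
constant of `Lᵖ` times the loss from passing to a ball of half the radius. -/
def overlapConst (p : ℝ≥0∞) (d : ℕ) : ℝ≥0∞ :=
  LpAddConst p * (2 ^ d) ^ p.toReal⁻¹

theorem overlapConst_ne_zero (p : ℝ≥0∞) (d : ℕ) : overlapConst p d ≠ 0 := by
  unfold overlapConst LpAddConst
  split_ifs <;> simp

theorem overlapConst_ne_top (p : ℝ≥0∞) (d : ℕ) : overlapConst p d ≠ ∞ :=
  ENNReal.mul_ne_top (LpAddConst_lt_top p).ne
    (ENNReal.rpow_ne_top_of_nonneg (by positivity) (by finiteness))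

theorem measure_ball_le_two_pow_mul (x y : E) {ρ ρ' : ℝ} (hρ' : ρ' ≤ 2 * ρ) :
    μ (ball x ρ') ≤ 2 ^ Module.finrank ℝ E * μ (ball y ρ) :=
  calc μ (ball x ρ') ≤ μ (ball x (2 * ρ)) := by gcongr
    _ = ENNReal.ofReal (2 ^ Module.finrank ℝ E) * μ (ball y ρ) := by
      rw [Measure.addHaar_ball_mul_of_pos μ x two_pos, Measure.addHaar_ball_center μ y]
    _ = _ := by rw [ENNReal.ofReal_pow zero_le_two, ENNReal.ofReal_ofNat]

theorem edist_le_of_ball_subset (hu : AEStronglyMeasurable u μ) (hp0 : p ≠ 0) {w x₁ x₂ : E}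
    {ρ ρ₁ ρ₂ : ℝ} (hρ : 0 < ρ) (h₁ : ball w ρ ⊆ ball x₁ ρ₁) (hρ₁ : ρ₁ ≤ 2 * ρ)
    (h₂ : ball w ρ ⊆ ball x₂ ρ₂) (hρ₂ : ρ₂ ≤ 2 * ρ) (c₁ c₂ : F) :
    edist c₁ c₂ ≤ overlapConst p (Module.finrank ℝ E) *
      (eLpNorm (fun z => u z - c₁) p μ[|ball x₁ ρ₁] +
        eLpNorm (fun z => u z - c₂) p μ[|ball x₂ ρ₂]) := by
  have := isProbabilityMeasure_cond_ball (μ := μ) w hρ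
  exact edist_le_of_measure_le_smul (ν := μ[|ball w ρ]) (hu.mono_ac cond_absolutelyContinuous) hp0
    (by positivity)
    (cond_le_smul_cond h₁ (by positivity) (by finiteness) (measure_ball_le_two_pow_mul _ _ hρ₁))
    (cond_le_smul_cond h₂ (by positivity) (by finiteness) (measure_ball_le_two_pow_mul _ _ hρ₂))
    c₁ c₂

theorem edist_le_of_dist_lt (hu : AEStronglyMeasurable u μ) (hp0 : p ≠ 0) {x y : E} {ρ : ℝ}
    (hxy : dist x y < ρ) (c₁ c₂ : F) :
    edist c₁ c₂ ≤ overlapConst p (Module.finrank ℝ E) *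
      (eLpNorm (fun z => u z - c₁) p μ[|ball x ρ] +
        eLpNorm (fun z => u z - c₂) p μ[|ball y ρ]) := by
  have hρ : 0 < ρ / 2 := half_pos (dist_nonneg.trans_lt hxy)
  refine edist_le_of_ball_subset (w := midpoint ℝ x y) hu hp0 hρ (ball_subset_ball' ?_)
    (by linarith) (ball_subset_ball' ?_) (by linarith) c₁ c₂
  · rw [dist_midpoint_left, Real.norm_ofNat]; linarith
  · rw [dist_midpoint_right, Real.norm_ofNat]; linarith

theorem tendsto_div_two_pow {r : ℝ} (hr : 0 < r) :
    Tendsto (fun j : ℕ => r / 2 ^ j) atTop (𝓝[>] 0) :=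
  tendsto_nhdsWithin_iff.2
    ⟨(tendsto_pow_atTop_atTop_of_one_lt (one_lt_two (α := ℝ))).const_div_atTop r,
      .of_forall fun _ => div_pos hr (by positivity)⟩

variable {t : ℝ≥0∞} {r : ℝ} {x y : E}

theorem pow_mul_edist_sq_le_of_eq_lpOsc (hu : AEStronglyMeasurable u μ) (hp0 : p ≠ 0) (hp : p ≠ ∞)
    (ht : 1 < t) (ht' : t ≠ ∞) (hr : 0 < r) (hux : ApproxContinuousAt μ u x) {c : ℕ → F}
    (hc : ∀ j, eLpNorm (fun z => u z - c j) p μ[|ball x (r / 2 ^ j)] = lpOsc p μ u x (r / 2 ^ j))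
    (k : ℕ) :
    t ^ k * edist (c k) (u x) ^ 2 ≤
      4 * overlapConst p (Module.finrank ℝ E) ^ 2 * (1 - t⁻¹)⁻¹ *
        weightedTail t (fun j => lpOsc p μ u x (r / 2 ^ j) ^ 2) k := by
  by_cases htail : weightedTail t (fun j => lpOsc p μ u x (r / 2 ^ j) ^ 2) k = ∞
  · rw [htail, ENNReal.mul_top (by simp [overlapConst_ne_zero])]
    exact le_top
  have hosc : Tendsto (fun j => lpOsc p μ u x (r / 2 ^ j)) atTop (𝓝 0) := by
    simpa only [ENNReal.pow_rpow_inv_natCast two_ne_zero,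
      ENNReal.zero_rpow_of_pos (inv_pos.2 (Nat.cast_pos.2 two_pos))] using
      (tendsto_zero_of_weightedTail_ne_top ht.le htail).ennrpow_const ((2 : ℕ) : ℝ)⁻¹
  have hlim : Tendsto c atTop (𝓝 (u x)) :=
    hux.tendsto_of_eLpNorm hu hp0 hp (tendsto_div_two_pow hr) (by simpa only [hc] using hosc)
  refine pow_mul_edist_sq_le_weightedTail ht ht' hlim (fun j => ?_) k
  rw [← hc j, ← hc (j + 1)]
  have hρ : r / 2 ^ j = 2 * (r / 2 ^ (j + 1)) := by ring
  have hρ0 : 0 < r / 2 ^ (j + 1) := by positivity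
  exact edist_le_of_ball_subset hu hp0 hρ0 (ball_subset_ball (by linarith)) hρ.le subset_rfl
    (by linarith) _ _

theorem pow_mul_edist_sq_le_lpOsc_tails [ProperSpace F] (hu : AEStronglyMeasurable u μ)
    (hp0 : p ≠ 0) (hp : p ≠ ∞) (ht : 1 < t) (ht' : t ≠ ∞) (hr : 0 < r)
    (hux : ApproxContinuousAt μ u x) (huy : ApproxContinuousAt μ u y) {k : ℕ}
    (hxy : dist x y < r / 2 ^ k) :
    t ^ k * edist (u x) (u y) ^ 2 ≤
      4 * overlapConst p (Module.finrank ℝ E) ^ 2 * (1 + 4 * (1 - t⁻¹)⁻¹) *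
        (weightedTail t (fun j => lpOsc p μ u x (r / 2 ^ j) ^ 2) k +
          weightedTail t (fun j => lpOsc p μ u y (r / 2 ^ j) ^ 2) k) := by
  have hbest (z : E) (j : ℕ) :
      ∃ c : F, eLpNorm (fun w => u w - c) p μ[|ball z (r / 2 ^ j)] = lpOsc p μ u z (r / 2 ^ j) := by
    have := isProbabilityMeasure_cond_ball (μ := μ) z (ρ := r / 2 ^ j) (by positivity)
    exact exists_eLpNorm_sub_const_eq_lpOsc hu hp0 hp
  choose c hc using hbest
  have hcux := pow_mul_edist_sq_le_of_eq_lpOsc hu hp0 hp ht ht' hr hux (hc x) k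
  have hcuy := pow_mul_edist_sq_le_of_eq_lpOsc hu hp0 hp ht ht' hr huy (hc y) k
  have hcc := edist_le_of_dist_lt hu hp0 hxy (c x k) (c y k)
  rw [hc, hc] at hcc
  set K := overlapConst p (Module.finrank ℝ E)
  set ox := fun j : ℕ => lpOsc p μ u x (r / 2 ^ j)
  set oy := fun j : ℕ => lpOsc p μ u y (r / 2 ^ j)
  calc t ^ k * edist (u x) (u y) ^ 2
      ≤ t ^ k * (2 * ((K * (ox k + oy k)) ^ 2 +
          2 * (edist (c x k) (u x) ^ 2 + edist (c y k) (u y) ^ 2))) := by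
        grw [edist_sq_le_of_edist_sq (u x) (u y) (c x k) (c y k), hcc]
    _ ≤ t ^ k * (2 * (K ^ 2 * (2 * (ox k ^ 2 + oy k ^ 2)) +
          2 * (edist (c x k) (u x) ^ 2 + edist (c y k) (u y) ^ 2))) := by
        grw [mul_pow, add_sq_le_two_mul_add_sq (ox k)]
    _ = 4 * K ^ 2 * (t ^ k * ox k ^ 2 + t ^ k * oy k ^ 2) +
          4 * (t ^ k * edist (c x k) (u x) ^ 2 + t ^ k * edist (c y k) (u y) ^ 2) := by ring
    _ ≤ 4 * K ^ 2 * (weightedTail t (fun j => ox j ^ 2) k + weightedTail t (fun j => oy j ^ 2) k) +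
          4 * (4 * K ^ 2 * (1 - t⁻¹)⁻¹ * weightedTail t (fun j => ox j ^ 2) k +
            4 * K ^ 2 * (1 - t⁻¹)⁻¹ * weightedTail t (fun j => oy j ^ 2) k) := by
        gcongr <;> exact pow_mul_le_weightedTail t (fun j => _) k
    _ = _ := by ring

end DyadicChain

section Tonelli

variable {E : Type*} [NormedAddCommGroup E] [MeasurableSpace E] [BorelSpace E]
  [SecondCountableTopology E] {μ ν : Measure E} [SFinite μ] [SFinite ν] [μ.IsAddLeftInvariant]

theorem measurableSet_dist_lt (ρ : ℝ) : MeasurableSet {q : E × E | dist q.1 q.2 < ρ} :=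
  measurableSet_lt measurable_dist measurable_const

theorem lintegral_prod_indicator_dist_lt_snd {f : E → ℝ≥0∞} (hf : AEMeasurable f ν) (ρ : ℝ) :
    ∫⁻ q, {q : E × E | dist q.1 q.2 < ρ}.indicator (fun q => f q.2) q ∂(μ.prod ν) =
      μ (ball 0 ρ) * ∫⁻ z, f z ∂ν := by
  have hsection (z : E) :
      ∫⁻ x, {q : E × E | dist q.1 q.2 < ρ}.indicator (fun q => f q.2) (x, z) ∂μ =
        μ (ball 0 ρ) * f z :=
    calc _ = ∫⁻ x, (ball z ρ).indicator (fun _ => f z) x ∂μ := rfl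
      _ = f z * μ (ball z ρ) := by
        rw [lintegral_indicator measurableSet_ball, setLIntegral_const]
      _ = μ (ball 0 ρ) * f z := by
        rw [mul_comm, ← measure_preimage_add μ z (ball z ρ), preimage_add_ball, sub_self]
  rw [lintegral_prod_symm _ (hf.comp_snd.indicator (measurableSet_dist_lt ρ))]
  simp only [hsection]
  rw [lintegral_const_mul'' _ hf]

theorem lintegral_setLIntegral_ball {f : E → ℝ≥0∞} (hf : AEMeasurable f ν) (ρ : ℝ) :
    ∫⁻ x, ∫⁻ z in ball x ρ, f z ∂ν ∂μ = μ (ball 0 ρ) * ∫⁻ z, f z ∂ν := by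
  rw [← lintegral_prod_indicator_dist_lt_snd hf,
    lintegral_prod _ (hf.comp_snd.indicator (measurableSet_dist_lt ρ))]
  refine lintegral_congr fun x => ?_
  rw [← lintegral_indicator measurableSet_ball]
  simp only [indicator, mem_ball']
  rfl

theorem lintegral_prod_indicator_dist_lt_add_le (hνμ : ν ≤ μ) {f : E → ℝ≥0∞} (hf : Measurable f)
    (ρ : ℝ) :
    ∫⁻ q, {q : E × E | dist q.1 q.2 < ρ}.indicator (fun q => f q.1 + f q.2) q ∂(ν.prod ν) ≤
      2 * μ (ball 0 ρ) * ∫⁻ z, f z ∂ν := by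
  set A := {q : E × E | dist q.1 q.2 < ρ}
  have hswap : ∫⁻ q, A.indicator (fun q => f q.1) q ∂(ν.prod ν) =
      ∫⁻ q, A.indicator (fun q => f q.2) q ∂(ν.prod ν) := by
    rw [← lintegral_prod_swap]
    simp only [A, indicator, Prod.fst_swap, Prod.snd_swap, mem_ofPred_eq, dist_comm]
  have hmeas : Measurable (A.indicator fun q : E × E => f q.1) :=
    (hf.comp measurable_fst).indicator (measurableSet_dist_lt ρ)
  calc ∫⁻ q, A.indicator (fun q => f q.1 + f q.2) q ∂(ν.prod ν)
      = 2 * ∫⁻ q, A.indicator (fun q => f q.2) q ∂(ν.prod ν) := by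
        rw [two_mul]
        nth_rw 1 [← hswap]
        rw [← lintegral_add_left hmeas]
        exact lintegral_congr fun q => congrFun (indicator_add A _ _) q
    _ ≤ 2 * ∫⁻ q, A.indicator (fun q => f q.2) q ∂(μ.prod ν) := by
        gcongr
    _ = _ := by rw [lintegral_prod_indicator_dist_lt_snd hf.aemeasurable, mul_assoc]

theorem lintegral_tsum_indicator_dist_lt_add_le (hνμ : ν ≤ μ) (a : ℕ → ℝ≥0∞) {W : ℕ → E → ℝ≥0∞}
    (hW : ∀ k, Measurable (W k)) (ρ : ℕ → ℝ) :
    ∫⁻ q, ∑' k, a k * {q : E × E | dist q.1 q.2 < ρ k}.indicator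
        (fun q => W k q.1 + W k q.2) q ∂(ν.prod ν) ≤
      ∑' k, a k * (2 * μ (ball 0 (ρ k)) * ∫⁻ z, W k z ∂ν) := by
  have hmeas (k : ℕ) : Measurable ({q : E × E | dist q.1 q.2 < ρ k}.indicator
      fun q => W k q.1 + W k q.2) :=
    (((hW k).comp measurable_fst).add ((hW k).comp measurable_snd)).indicator
      (measurableSet_dist_lt _)
  rw [lintegral_tsum fun k => ((hmeas k).const_mul _).aemeasurable]
  simp only [lintegral_const_mul _ (hmeas _)]
  gcongr with k
  exact lintegral_prod_indicator_dist_lt_add_le hνμ (hW k) _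

end Tonelli

/-! ### Gagliardo and oscillation energies -/

/-- The Gagliardo energy of `u` on `S`: the square of the `W^{α,2}(S)` seminorm. The integrand is
`0` on the diagonal, as `0 / 0 = 0` in `ℝ≥0∞`. -/
def gagliardoEnergy {E F : Type*} [NormedAddCommGroup E] [NormedSpace ℝ E] [MeasurableSpace E]
    [NormedAddCommGroup F] (μ : Measure E) (α : ℝ) (u : E → F) (S : Set E) : ℝ≥0∞ :=
  ∫⁻ x in S, ∫⁻ y in S, edist (u x) (u y) ^ 2 / edist x y ^ (Module.finrank ℝ E + 2 * α) ∂μ ∂μ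

/-- The dyadic oscillation energy of `u` on `S` from the scale `r` down: the scale-weighted `ℓ²` sum
of the `L²(S)` norms of the `Lᵖ` mean oscillations of `u` over balls of radius `r / 2 ^ k`. -/
def dyadicOscEnergy {X F : Type*} [PseudoMetricSpace X] [MeasurableSpace X] [NormedAddCommGroup F]
    (p : ℝ≥0∞) (μ : Measure X) (α : ℝ) (u : X → F) (S : Set X) (r : ℝ) : ℝ≥0∞ :=
  ∑' k : ℕ, ENNReal.ofReal (r / 2 ^ k) ^ (-(2 * α)) * ∫⁻ x in S, lpOsc p μ u x (r / 2 ^ k) ^ 2 ∂μ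

theorem ofReal_div_rpow {a : ℝ} (r e : ℝ) (ha : 0 < a) :
    ENNReal.ofReal (r / a) ^ e = ENNReal.ofReal a ^ (-e) * ENNReal.ofReal r ^ e := by
  rw [ENNReal.ofReal_div_of_pos ha, div_eq_mul_inv, ENNReal.mul_rpow_of_ne_top (by finiteness)
    (by simpa), ENNReal.inv_rpow, ENNReal.rpow_neg, mul_comm]

theorem ofReal_div_two_pow_rpow_neg (r β : ℝ) (k : ℕ) :
    ENNReal.ofReal (r / 2 ^ k) ^ (-β) = ENNReal.ofReal r ^ (-β) * ((2 : ℝ≥0∞) ^ β) ^ k := by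
  rw [ofReal_div_rpow _ _ (by positivity), neg_neg, mul_comm, ENNReal.ofReal_pow zero_le_two,
    ENNReal.ofReal_ofNat, ← ENNReal.rpow_natCast, ← ENNReal.rpow_natCast, ← ENNReal.rpow_mul,
    ← ENNReal.rpow_mul, mul_comm β]

theorem ofReal_div_two_pow_succ_rpow_neg (r β : ℝ) (k : ℕ) :
    ENNReal.ofReal (r / 2 ^ (k + 1)) ^ (-β) = ENNReal.ofReal (r / 2 ^ k) ^ (-β) * 2 ^ β := by
  rw [ofReal_div_two_pow_rpow_neg, ofReal_div_two_pow_rpow_neg, pow_succ, mul_assoc]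

theorem two_rpow_two_mul_pow (α : ℝ) (k : ℕ) :
    ((2 : ℝ≥0∞) ^ (2 * α)) ^ k = ((2 : ℝ≥0∞) ^ α) ^ (2 * k) := by
  rw [mul_comm 2 α, ENNReal.rpow_mul, ENNReal.rpow_two, ← pow_mul]

theorem rpow_neg_mul_pow_mul_inv_pow {r : ℝ} (hr : 0 < r) (α : ℝ) (d k : ℕ) :
    ENNReal.ofReal (r / 2 ^ (k + 1)) ^ (-(d + 2 * α)) * ENNReal.ofReal ((r / 2 ^ k) ^ d) *
        ((2 : ℝ≥0∞) ^ α)⁻¹ ^ k =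
      2 ^ (d + 2 * α) * (ENNReal.ofReal r ^ (-(2 * α)) * ((2 : ℝ≥0∞) ^ α) ^ k) := by
  have hρ : 0 < r / 2 ^ k := by positivity
  have hR : ENNReal.ofReal (r / 2 ^ k) ^ (-(d + 2 * α)) * ENNReal.ofReal ((r / 2 ^ k) ^ d) =
      ENNReal.ofReal (r / 2 ^ k) ^ (-(2 * α)) := by
    rw [ENNReal.ofReal_pow hρ.le, ← ENNReal.rpow_natCast,
      ← ENNReal.rpow_add _ _ (by simpa using hρ) (by finiteness)]
    congr 1; ring
  have ht : ((2 : ℝ≥0∞) ^ α) ^ k * ((2 : ℝ≥0∞) ^ α)⁻¹ ^ k = 1 := by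
    rw [← mul_pow, ENNReal.mul_inv_cancel, one_pow]
    · exact (ENNReal.rpow_pos two_pos (by finiteness)).ne'
    · exact ENNReal.rpow_ne_top_of_ne_zero two_ne_zero ofNat_ne_top
  calc _ = 2 ^ (d + 2 * α) * (ENNReal.ofReal (r / 2 ^ k) ^ (-(d + 2 * α)) *
          ENNReal.ofReal ((r / 2 ^ k) ^ d)) * ((2 : ℝ≥0∞) ^ α)⁻¹ ^ k := by
        rw [ofReal_div_two_pow_succ_rpow_neg]; ring
    _ = 2 ^ (d + 2 * α) * (ENNReal.ofReal r ^ (-(2 * α)) * ((2 : ℝ≥0∞) ^ α) ^ k) *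
          (((2 : ℝ≥0∞) ^ α) ^ k * ((2 : ℝ≥0∞) ^ α)⁻¹ ^ k) := by
        rw [hR, ofReal_div_two_pow_rpow_neg, two_rpow_two_mul_pow]; ring
    _ = _ := by rw [ht, mul_one]

theorem dyadicOscEnergy_eq_rpow_neg_mul_tsum {X F : Type*} [PseudoMetricSpace X] [MeasurableSpace X]
    [NormedAddCommGroup F] (p : ℝ≥0∞) (μ : Measure X) (α : ℝ) (u : X → F) (S : Set X) (r : ℝ) :
    dyadicOscEnergy p μ α u S r = ENNReal.ofReal r ^ (-(2 * α)) *
      ∑' k : ℕ, ((2 : ℝ≥0∞) ^ α) ^ (2 * k) * ∫⁻ x in S, lpOsc p μ u x (r / 2 ^ k) ^ 2 ∂μ := by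
  simp only [dyadicOscEnergy, ofReal_div_two_pow_rpow_neg, two_rpow_two_mul_pow, mul_assoc,
    ENNReal.tsum_mul_left]

theorem exists_div_two_pow_succ_le_lt {r d : ℝ} (hd : 0 < d) (hdr : d < r) :
    ∃ k : ℕ, r / 2 ^ (k + 1) ≤ d ∧ d < r / 2 ^ k := by
  have hex : ∃ k : ℕ, r / 2 ^ (k + 1) ≤ d :=
    (((tendsto_div_two_pow (hd.trans hdr)).mono_right nhdsWithin_le_nhds).comp
      (tendsto_add_atTop_nat 1)).eventually_le_const hd |>.exists
  classical
  refine ⟨Nat.find hex, Nat.find_spec hex, ?_⟩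
  cases h : Nat.find hex with
  | zero => simpa using hdr
  | succ k => exact not_le.1 (Nat.find_min hex (h ▸ k.lt_succ_self))

section Energies

variable {E F : Type*} [NormedAddCommGroup E] [NormedSpace ℝ E] [MeasurableSpace E]
  [NormedAddCommGroup F]

theorem gagliardoEnergy_eq_lintegral_prod [SecondCountableTopology E] [OpensMeasurableSpace E]
    {μ : Measure E} [SFinite μ] {u : E → F} (hu : AEStronglyMeasurable u μ) (α : ℝ) (S : Set E) :
    gagliardoEnergy μ α u S = ∫⁻ q, edist (u q.1) (u q.2) ^ 2 /
      edist q.1 q.2 ^ (Module.finrank ℝ E + 2 * α) ∂((μ.restrict S).prod (μ.restrict S)) := by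
  have huS := hu.mono_measure (Measure.restrict_le_self (s := S))
  have hmeas : AEMeasurable (fun q : E × E => edist (u q.1) (u q.2) ^ 2 /
      edist q.1 q.2 ^ (Module.finrank ℝ E + 2 * α)) ((μ.restrict S).prod (μ.restrict S)) :=
    ((huS.comp_fst.edist huS.comp_snd).pow_const 2).div
      (measurable_edist.pow_const _).aemeasurable
  exact (lintegral_prod _ hmeas).symm

end Energies

theorem edist_sq_div_rpow_le_tsum_indicator {X F : Type*} [MetricSpace X] [PseudoEMetricSpace F]
    {u : X → F} {W : ℕ → X → ℝ≥0∞} {x y : X} {α r : ℝ} (h : ∀ k : ℕ, dist x y < r / 2 ^ k →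
      ((2 : ℝ≥0∞) ^ α) ^ k * edist (u x) (u y) ^ 2 ≤ W k x + W k y)
    (hxy : dist x y < r) {D : ℝ} (hD : 0 ≤ D) :
    edist (u x) (u y) ^ 2 / edist x y ^ D ≤
      ∑' k : ℕ, ENNReal.ofReal (r / 2 ^ (k + 1)) ^ (-D) * ((2 : ℝ≥0∞) ^ α)⁻¹ ^ k *
        {q : X × X | dist q.1 q.2 < r / 2 ^ k}.indicator (fun q => W k q.1 + W k q.2) (x, y) := by
  rcases eq_or_ne x y with rfl | hne
  · simp
  obtain ⟨k, hk, hk'⟩ := exists_div_two_pow_succ_le_lt (dist_pos.2 hne) hxy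
  have ht0 : (2 : ℝ≥0∞) ^ α ≠ 0 := (ENNReal.rpow_pos two_pos (by finiteness)).ne'
  have ht : ((2 : ℝ≥0∞) ^ α)⁻¹ ^ k * ((2 : ℝ≥0∞) ^ α) ^ k = 1 := by
    rw [← mul_pow, ENNReal.inv_mul_cancel ht0 (by finiteness), one_pow]
  refine le_trans ?_ (ENNReal.le_tsum k)
  rw [indicator_of_mem (by exact hk')]
  calc edist (u x) (u y) ^ 2 / edist x y ^ D
      = edist x y ^ (-D) * ((2 : ℝ≥0∞) ^ α)⁻¹ ^ k *
          (((2 : ℝ≥0∞) ^ α) ^ k * edist (u x) (u y) ^ 2) := by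
        rw [mul_assoc, ← mul_assoc (_ ^ k), ht, one_mul, ENNReal.rpow_neg, mul_comm,
          ENNReal.div_eq_inv_mul, mul_comm]
    _ ≤ ENNReal.ofReal (r / 2 ^ (k + 1)) ^ (-D) * ((2 : ℝ≥0∞) ^ α)⁻¹ ^ k * (W k x + W k y) := by
        rw [ENNReal.rpow_neg, ENNReal.rpow_neg]
        gcongr
        · exact (ENNReal.ofReal_le_ofReal hk).trans_eq (edist_dist x y).symm
        · exact h k hk'

section GagliardoLeOsc

variable {E F : Type*} [NormedAddCommGroup E] [NormedSpace ℝ E] [FiniteDimensional ℝ E]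
  [MeasurableSpace E] [BorelSpace E] [NormedAddCommGroup F] {μ : Measure E} [μ.IsAddHaarMeasure]
  {p : ℝ≥0∞} {α : ℝ} {u : E → F} {S : Set E} {r : ℝ}

theorem gagliardoEnergy_le_tsum_of_pow_mul_edist_sq_le (hα : 0 ≤ α)
    (hu : AEStronglyMeasurable u μ) (hr : 0 < r) (hS : MeasurableSet S)
    (hSr : ∀ x ∈ S, ∀ y ∈ S, dist x y < r) {W : ℕ → E → ℝ≥0∞} (hW : ∀ k, Measurable (W k))
    {P : E → Prop} (hP : ∀ᵐ x ∂μ, P x)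
    (h : ∀ x y, P x → P y → ∀ k : ℕ, dist x y < r / 2 ^ k →
      ((2 : ℝ≥0∞) ^ α) ^ k * edist (u x) (u y) ^ 2 ≤ W k x + W k y) :
    gagliardoEnergy μ α u S ≤ 2 * μ (ball 0 1) * 2 ^ (Module.finrank ℝ E + 2 * α) *
      (ENNReal.ofReal r ^ (-(2 * α)) *
        ∑' k : ℕ, ((2 : ℝ≥0∞) ^ α) ^ k * ∫⁻ x in S, W k x ∂μ) := by
  set d := Module.finrank ℝ E
  set ν := μ.restrict S
  set a : ℕ → ℝ≥0∞ := fun k =>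
    ENNReal.ofReal (r / 2 ^ (k + 1)) ^ (-(d + 2 * α)) * ((2 : ℝ≥0∞) ^ α)⁻¹ ^ k
  set A : ℕ → Set (E × E) := fun k => {q | dist q.1 q.2 < r / 2 ^ k}
  have hgood : ∀ᵐ x ∂ν, P x ∧ x ∈ S := (ae_restrict_of_ae hP).and (ae_restrict_mem hS)
  have hkernel : ∀ᵐ q ∂ν.prod ν, edist (u q.1) (u q.2) ^ 2 / edist q.1 q.2 ^ (d + 2 * α) ≤
      ∑' k, a k * (A k).indicator (fun q => W k q.1 + W k q.2) q := by
    filter_upwards [Measure.quasiMeasurePreserving_fst.ae hgood,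
      Measure.quasiMeasurePreserving_snd.ae hgood] with q hx hy
    exact edist_sq_div_rpow_le_tsum_indicator (h _ _ hx.1 hy.1) (hSr _ hx.2 _ hy.2) (by positivity)
  have hscale (k : ℕ) : a k * (2 * μ (ball 0 (r / 2 ^ k)) * ∫⁻ z, W k z ∂ν) =
      2 * μ (ball 0 1) * 2 ^ (d + 2 * α) * (ENNReal.ofReal r ^ (-(2 * α)) *
        (((2 : ℝ≥0∞) ^ α) ^ k * ∫⁻ z, W k z ∂ν)) := by
    rw [Measure.addHaar_ball_of_pos μ 0 (by positivity)]
    calc _ = 2 * μ (ball 0 1) * (ENNReal.ofReal (r / 2 ^ (k + 1)) ^ (-(d + 2 * α)) *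
          ENNReal.ofReal ((r / 2 ^ k) ^ d) * ((2 : ℝ≥0∞) ^ α)⁻¹ ^ k) * ∫⁻ z, W k z ∂ν := by ring
      _ = _ := by rw [rpow_neg_mul_pow_mul_inv_pow hr]; ring
  calc gagliardoEnergy μ α u S
      ≤ ∫⁻ q, ∑' k, a k * (A k).indicator (fun q => W k q.1 + W k q.2) q ∂ν.prod ν := by
        rw [gagliardoEnergy_eq_lintegral_prod hu]
        exact lintegral_mono_ae hkernel
    _ ≤ ∑' k, a k * (2 * μ (ball 0 (r / 2 ^ k)) * ∫⁻ z, W k z ∂ν) :=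
        lintegral_tsum_indicator_dist_lt_add_le Measure.restrict_le_self a hW _
    _ = _ := by simp only [hscale, ENNReal.tsum_mul_left]

theorem exists_gagliardoEnergy_le_mul_dyadicOscEnergy (F : Type*) [NormedAddCommGroup F]
    [ProperSpace F] (μ : Measure E) [μ.IsAddHaarMeasure] (hp0 : p ≠ 0) (hp : p ≠ ∞) (hα : 0 < α) :
    ∃ C ≠ ∞, ∀ (u : E → F) (S : Set E) (r : ℝ), AEStronglyMeasurable u μ → MeasurableSet S → 0 < r →
      (∀ x ∈ S, ∀ y ∈ S, dist x y < r) →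
      gagliardoEnergy μ α u S ≤ C * dyadicOscEnergy p μ α u S r := by
  set d := Module.finrank ℝ E
  set t := (2 : ℝ≥0∞) ^ α
  have ht : 1 < t := ENNReal.one_lt_rpow one_lt_two hα
  have ht' : t ≠ ∞ := by finiteness
  have hgeom : (1 - t⁻¹)⁻¹ ≠ ∞ := inv_one_sub_inv_ne_top ht
  set K := 4 * overlapConst p d ^ 2 * (1 + 4 * (1 - t⁻¹)⁻¹)
  refine ⟨2 * μ (ball 0 1) * 2 ^ (d + 2 * α) * (K * (1 - t⁻¹)⁻¹), ?_,
    fun u S r hu hS hr hSr => ?_⟩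
  · have := overlapConst_ne_top p d
    finiteness [measure_ball_lt_top (μ := μ) (x := (0 : E)) (r := 1)]
  set o : E → ℕ → ℝ≥0∞ := fun x j => lpOsc p μ u x (r / 2 ^ j) ^ 2
  have ho (j : ℕ) : Measurable fun x => o x j := (measurable_lpOsc hu hp0 hp _).pow_const 2
  have htail (k : ℕ) : Measurable fun x => weightedTail t (o x) k := measurable_weightedTail t ho k
  calc gagliardoEnergy μ α u S
      ≤ 2 * μ (ball 0 1) * 2 ^ (d + 2 * α) * (ENNReal.ofReal r ^ (-(2 * α)) *
          ∑' k, t ^ k * ∫⁻ x in S, K * weightedTail t (o x) k ∂μ) :=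
        gagliardoEnergy_le_tsum_of_pow_mul_edist_sq_le hα.le hu hr hS hSr
          (fun k => (htail k).const_mul K) (ae_approxContinuousAt u) fun x y hx hy k hxy => by
          rw [← mul_add]
          exact pow_mul_edist_sq_le_lpOsc_tails hu hp0 hp ht ht' hr hx hy hxy
    _ ≤ _ := by
        rw [dyadicOscEnergy_eq_rpow_neg_mul_tsum]
        simp only [lintegral_const_mul _ (htail _), mul_left_comm _ K, ENNReal.tsum_mul_left]
        grw [tsum_pow_mul_lintegral_weightedTail_le ht.le ht' ho]
        exact le_of_eq (by ring)

end GagliardoLeOsc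

theorem lpOsc_sq_le {X F : Type*} [PseudoMetricSpace X] [MeasurableSpace X] [NormedAddCommGroup F]
    {p : ℝ≥0∞} {μ : Measure X} {u : X → F} {x : X} {ρ : ℝ} [IsProbabilityMeasure μ[|ball x ρ]]
    (hu : AEStronglyMeasurable u μ) (hp : p ≤ 2) :
    lpOsc p μ u x ρ ^ 2 ≤
      ∫⁻ w, ∫⁻ z, edist (u w) (u z) ^ 2 ∂μ[|ball x ρ] ∂μ[|ball x ρ] := by
  have hpoint (w : X) : lpOsc p μ u x ρ ^ 2 ≤ ∫⁻ z, edist (u w) (u z) ^ 2 ∂μ[|ball x ρ] :=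
    calc lpOsc p μ u x ρ ^ 2
        ≤ eLpNorm (fun z => u z - u w) 2 μ[|ball x ρ] ^ 2 := by
          gcongr
          exact (iInf_le _ (u w)).trans (eLpNorm_le_eLpNorm_of_exponent_le hp
            ((hu.mono_ac cond_absolutelyContinuous).sub aestronglyMeasurable_const))
      _ = ∫⁻ z, edist (u w) (u z) ^ 2 ∂μ[|ball x ρ] := by
          simpa [edist_comm (u w), edist_eq_enorm_sub] using
            eLpNorm_nnreal_pow_eq_lintegral (μ := μ[|ball x ρ]) (f := fun z => u z - u w)
              (p := 2) two_ne_zero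
  simpa using lintegral_mono (μ := μ[|ball x ρ]) hpoint

theorem tsum_indicator_dist_lt_le {X : Type*} [PseudoMetricSpace X] {D : ℝ} (hD : 0 < D) (r : ℝ)
    (f : X × X → ℝ≥0∞) (q : X × X) :
    ∑' k : ℕ, ENNReal.ofReal (r / 2 ^ k) ^ (-D) *
        {q : X × X | dist q.1 q.2 < 2 * (r / 2 ^ k)}.indicator f q ≤
      (1 - ((2 : ℝ≥0∞) ^ D)⁻¹)⁻¹ * 2 ^ D * (f q / edist q.1 q.2 ^ D) := by
  classical
  have h2 : (2 : ℝ≥0∞) ^ D ≠ ∞ := by finiteness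
  have hgrowth (k : ℕ) : ENNReal.ofReal (r / 2 ^ k) ^ (-D) ≤
      ((2 : ℝ≥0∞) ^ D)⁻¹ * ENNReal.ofReal (r / 2 ^ (k + 1)) ^ (-D) := by
    rw [ofReal_div_two_pow_succ_rpow_neg, mul_comm, mul_assoc, ENNReal.mul_inv_cancel
      (ENNReal.rpow_pos two_pos (by finiteness)).ne' h2, mul_one]
  have hlast (k : ℕ) (hk : dist q.1 q.2 < 2 * (r / 2 ^ k)) :
      ENNReal.ofReal (r / 2 ^ k) ^ (-D) ≤ 2 ^ D * (edist q.1 q.2 ^ D)⁻¹ := by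
    rw [ENNReal.rpow_neg, ENNReal.inv_le_iff_inv_le,
      ENNReal.mul_inv (.inl (ENNReal.rpow_pos two_pos (by finiteness)).ne') (.inl h2), inv_inv,
      ← ENNReal.inv_rpow, ← ENNReal.mul_rpow_of_nonneg _ _ hD.le]
    gcongr
    rw [← ENNReal.div_eq_inv_mul, edist_dist]
    refine ENNReal.div_le_of_le_mul' ?_
    rw [← ENNReal.ofReal_ofNat 2, ← ENNReal.ofReal_mul zero_le_two]
    gcongr
  calc _ = (∑' k : ℕ, if dist q.1 q.2 < 2 * (r / 2 ^ k) then ENNReal.ofReal (r / 2 ^ k) ^ (-D)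
          else 0) * f q := by
        rw [← ENNReal.tsum_mul_right]
        refine tsum_congr fun k => ?_
        simp only [indicator, mem_ofPred_eq]
        split_ifs <;> simp
    _ ≤ (1 - ((2 : ℝ≥0∞) ^ D)⁻¹)⁻¹ * (2 ^ D * (edist q.1 q.2 ^ D)⁻¹) * f q := by
        gcongr
        exact tsum_ite_le_of_le_mul_succ
          (ENNReal.inv_lt_one.2 (ENNReal.one_lt_rpow one_lt_two hD)) hgrowth hlast
    _ = _ := by rw [div_eq_mul_inv]; ring

section OscLeGagliardo

variable {E F : Type*} [NormedAddCommGroup E] [NormedSpace ℝ E] [FiniteDimensional ℝ E]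
  [MeasurableSpace E] [BorelSpace E] [NormedAddCommGroup F] {μ : Measure E} [μ.IsAddHaarMeasure]
  {p : ℝ≥0∞} {u : E → F} {S T : Set E} {r ρ : ℝ}

theorem lpOsc_sq_le_of_ball_subset (hp : p ≤ 2) (hu : AEStronglyMeasurable u μ) (hρ : 0 < ρ) {x : E}
    (hxT : ball x ρ ⊆ T) :
    lpOsc p μ u x ρ ^ 2 ≤ (μ (ball 0 ρ))⁻¹ * ((μ (ball 0 ρ))⁻¹ * ∫⁻ w in ball x ρ, ∫⁻ z,
      {q : E × E | dist q.1 q.2 < 2 * ρ}.indicator (fun q => edist (u q.1) (u q.2) ^ 2) (w, z)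
        ∂μ.restrict T ∂μ.restrict T) := by
  have := isProbabilityMeasure_cond_ball (μ := μ) x hρ
  have hm : (μ (ball 0 ρ))⁻¹ ≠ ∞ := ENNReal.inv_ne_top.2 (measure_ball_pos μ 0 hρ).ne'
  have hcond : μ[|ball x ρ] = (μ (ball 0 ρ))⁻¹ • (μ.restrict T).restrict (ball x ρ) := by
    rw [ProbabilityTheory.cond, Measure.restrict_restrict measurableSet_ball,
      inter_eq_left.2 hxT, Measure.addHaar_ball_center]
  grw [lpOsc_sq_le hu hp, hcond]
  simp only [lintegral_smul_measure, smul_eq_mul]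
  rw [lintegral_const_mul' _ _ hm]
  gcongr 2
  refine setLIntegral_mono' measurableSet_ball fun w hw => ?_
  rw [← lintegral_indicator measurableSet_ball]
  refine lintegral_mono fun z => indicator_apply_le' (fun hz => ?_) fun _ => zero_le
  have hwz : (w, z) ∈ {q : E × E | dist q.1 q.2 < 2 * ρ} := by
    rw [mem_ofPred_eq]
    linarith [dist_triangle_right w z x, mem_ball.1 hw, mem_ball.1 hz]
  rw [indicator_of_mem hwz]

theorem setLIntegral_lpOsc_sq_le (hp : p ≤ 2) (hu : AEStronglyMeasurable u μ) (hρ : 0 < ρ)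
    (hST : ∀ x ∈ S, ball x ρ ⊆ T) :
    ∫⁻ x in S, lpOsc p μ u x ρ ^ 2 ∂μ ≤ (μ (ball 0 ρ))⁻¹ *
      ∫⁻ q, {q : E × E | dist q.1 q.2 < 2 * ρ}.indicator (fun q => edist (u q.1) (u q.2) ^ 2) q
        ∂(μ.restrict T).prod (μ.restrict T) := by
  set ν := μ.restrict T
  set m := μ (ball 0 ρ)
  set g : E × E → ℝ≥0∞ := {q : E × E | dist q.1 q.2 < 2 * ρ}.indicator
    fun q => edist (u q.1) (u q.2) ^ 2
  have hm : m ≠ 0 := (measure_ball_pos μ 0 hρ).ne'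
  have huν : AEStronglyMeasurable u ν := hu.mono_measure Measure.restrict_le_self
  have hg : AEMeasurable g (ν.prod ν) :=
    ((huν.comp_fst.edist huν.comp_snd).pow_const 2).indicator (measurableSet_dist_lt _)
  have hgm : Measurable fun x => m⁻¹ * (m⁻¹ * ∫⁻ w in ball x ρ, ∫⁻ z, g (w, z) ∂ν ∂ν) :=
    ((measurable_setLIntegral_ball hg.lintegral_prod_right' ρ).const_mul _).const_mul _
  calc ∫⁻ x in S, lpOsc p μ u x ρ ^ 2 ∂μ
      ≤ ∫⁻ x in S, m⁻¹ * (m⁻¹ * ∫⁻ w in ball x ρ, ∫⁻ z, g (w, z) ∂ν ∂ν) ∂μ :=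
        setLIntegral_mono hgm fun x hx => lpOsc_sq_le_of_ball_subset hp hu hρ (hST x hx)
    _ ≤ ∫⁻ x, m⁻¹ * (m⁻¹ * ∫⁻ w in ball x ρ, ∫⁻ z, g (w, z) ∂ν ∂ν) ∂μ :=
        setLIntegral_le_lintegral _ _
    _ = m⁻¹ * (m⁻¹ * (m * ∫⁻ q, g q ∂ν.prod ν)) := by
        have hm' : m⁻¹ ≠ ∞ := ENNReal.inv_ne_top.2 hm
        rw [lintegral_const_mul' _ _ hm', lintegral_const_mul' _ _ hm',
          lintegral_setLIntegral_ball hg.lintegral_prod_right', lintegral_prod _ hg]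
    _ = m⁻¹ * ∫⁻ q, g q ∂ν.prod ν := by
        rw [← mul_assoc m⁻¹ m, ENNReal.inv_mul_cancel hm (by finiteness), one_mul]

theorem rpow_neg_mul_inv_measure_ball (μ : Measure E) [μ.IsAddHaarMeasure] (hρ : 0 < ρ) (β : ℝ) :
    ENNReal.ofReal ρ ^ (-β) * (μ (ball 0 ρ))⁻¹ =
      (μ (ball 0 1))⁻¹ * ENNReal.ofReal ρ ^ (-(Module.finrank ℝ E + β)) := by
  rw [Measure.addHaar_ball_of_pos μ 0 hρ, ENNReal.ofReal_pow hρ.le,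
    ENNReal.mul_inv (.inl (by simp [hρ])) (.inl (by finiteness)), neg_add,
    ENNReal.rpow_add _ _ (by simpa using hρ) (by finiteness),
    ENNReal.rpow_neg _ (Module.finrank ℝ E : ℝ), ENNReal.rpow_natCast]
  ring

theorem rpow_neg_mul_setLIntegral_lpOsc_sq_le (hp : p ≤ 2) (hu : AEStronglyMeasurable u μ)
    (hρ : 0 < ρ) (hST : ∀ x ∈ S, ball x ρ ⊆ T) (α : ℝ) :
    ENNReal.ofReal ρ ^ (-(2 * α)) * ∫⁻ x in S, lpOsc p μ u x ρ ^ 2 ∂μ ≤ (μ (ball 0 1))⁻¹ *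
      (ENNReal.ofReal ρ ^ (-(Module.finrank ℝ E + 2 * α)) *
        ∫⁻ q, {q : E × E | dist q.1 q.2 < 2 * ρ}.indicator (fun q => edist (u q.1) (u q.2) ^ 2) q
          ∂(μ.restrict T).prod (μ.restrict T)) := by
  grw [setLIntegral_lpOsc_sq_le hp hu hρ hST, ← mul_assoc, rpow_neg_mul_inv_measure_ball μ hρ,
    mul_assoc]

theorem exists_dyadicOscEnergy_le_mul_gagliardoEnergy (F : Type*) [NormedAddCommGroup F]
    (μ : Measure E) [μ.IsAddHaarMeasure] (hp : p ≤ 2) {α : ℝ}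
    (hα : 0 < α) :
    ∃ C ≠ ∞, ∀ (u : E → F) (S T : Set E) (r : ℝ), AEStronglyMeasurable u μ → 0 < r →
      (∀ x ∈ S, ball x r ⊆ T) →
      dyadicOscEnergy p μ α u S r ≤ C * gagliardoEnergy μ α u T := by
  set d := Module.finrank ℝ E
  set D := d + 2 * α
  have hD : 0 < D := by positivity
  set K := (1 - ((2 : ℝ≥0∞) ^ D)⁻¹)⁻¹ * 2 ^ D
  have hK : K ≠ ∞ :=
    ENNReal.mul_ne_top (inv_one_sub_inv_ne_top (ENNReal.one_lt_rpow one_lt_two hD)) (by finiteness)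
  refine ⟨(μ (ball 0 1))⁻¹ * K, ENNReal.mul_ne_top
    (ENNReal.inv_ne_top.2 (measure_ball_pos μ 0 one_pos).ne') hK, fun u S T r hu hr hST => ?_⟩
  set ν := μ.restrict T
  set A : ℕ → Set (E × E) := fun k => {q | dist q.1 q.2 < 2 * (r / 2 ^ k)}
  set f : E × E → ℝ≥0∞ := fun q => edist (u q.1) (u q.2) ^ 2
  have huν : AEStronglyMeasurable u ν := hu.mono_measure Measure.restrict_le_self
  have hf (k : ℕ) : AEMeasurable ((A k).indicator f) (ν.prod ν) :=
    ((huν.comp_fst.edist huν.comp_snd).pow_const 2).indicator (measurableSet_dist_lt _)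
  have hball (k : ℕ) (x : E) (hx : x ∈ S) : ball x (r / 2 ^ k) ⊆ T :=
    (ball_subset_ball (div_le_self hr.le (one_le_pow₀ one_le_two))).trans (hST x hx)
  calc dyadicOscEnergy p μ α u S r
      ≤ ∑' k : ℕ, (μ (ball 0 1))⁻¹ *
          (ENNReal.ofReal (r / 2 ^ k) ^ (-D) * ∫⁻ q, (A k).indicator f q ∂ν.prod ν) :=
        ENNReal.tsum_le_tsum fun k =>
          rpow_neg_mul_setLIntegral_lpOsc_sq_le hp hu (by positivity) (hball k) α
    _ = (μ (ball 0 1))⁻¹ * ∫⁻ q, ∑' k : ℕ,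
          ENNReal.ofReal (r / 2 ^ k) ^ (-D) * (A k).indicator f q ∂ν.prod ν := by
        rw [ENNReal.tsum_mul_left, lintegral_tsum fun k => (hf k).const_mul _]
        simp only [lintegral_const_mul'' _ (hf _)]
    _ ≤ (μ (ball 0 1))⁻¹ * ∫⁻ q, K * (f q / edist q.1 q.2 ^ D) ∂ν.prod ν := by
        gcongr with q
        exact tsum_indicator_dist_lt_le hD r f q
    _ = _ := by
        rw [lintegral_const_mul' _ _ hK, ← gagliardoEnergy_eq_lintegral_prod hu, ← mul_assoc]

end OscLeGagliardo

theorem dyadicOscEnergy_mono {X F : Type*} [PseudoMetricSpace X] [MeasurableSpace X]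
    [NormedAddCommGroup F] {p : ℝ≥0∞} {μ : Measure X} {α : ℝ} {u : X → F} {S T : Set X} {r : ℝ}
    (hST : S ⊆ T) : dyadicOscEnergy p μ α u S r ≤ dyadicOscEnergy p μ α u T r := by
  unfold dyadicOscEnergy
  gcongr

/-! ### Euclidean space -/

section Euclidean

variable {n : ℕ} {α q r a : ℝ} {u : Pt n → ℝ} {x₀ : Pt n}

theorem lintegral_kernel_eq_gagliardoEnergy (u : Pt n → ℝ) (S : Set (Pt n)) :
    ∫⁻ x in S, ∫⁻ y in S, ENNReal.ofReal (|u x - u y| ^ 2 / ‖x - y‖ ^ ((n : ℝ) + 2 * α)) =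
      gagliardoEnergy volume α u S := by
  unfold gagliardoEnergy
  congr! 4 with x y
  rcases eq_or_ne x y with rfl | hxy
  · simp
  have hpos : 0 < ‖x - y‖ := norm_sub_pos_iff.2 hxy
  rw [finrank_euclideanSpace_fin, ENNReal.ofReal_div_of_pos (by positivity),
    ENNReal.ofReal_pow (abs_nonneg _), ← ENNReal.ofReal_rpow_of_pos hpos, ← Real.dist_eq,
    ← edist_dist, ← dist_eq_norm, ← edist_dist]

theorem Phi_eq_gagliardoEnergy (hn : n ≠ 0) (u : Pt n → ℝ) (x₀ : Pt n) (hr : 0 < r) :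
    Phi α u x₀ r = volume (ball (0 : Pt n) 1) ^ (2 * α / n - 1) *
      (ENNReal.ofReal r ^ (2 * α - n) * gagliardoEnergy volume α u (ball x₀ r)) := by
  rw [Phi, lintegral_kernel_eq_gagliardoEnergy, Measure.addHaar_ball_of_pos _ _ hr,
    finrank_euclideanSpace_fin, ENNReal.ofReal_pow hr.le,
    ENNReal.mul_rpow_of_ne_top (by finiteness) (by finiteness), ← ENNReal.rpow_natCast_mul]
  have : (n : ℝ) * (2 * α / n - 1) = 2 * α - n := by field_simp
  rw [this]
  ring

theorem iInf_rpow_two_div_eq_lpOsc_sq (hq : 0 < q) (u : Pt n → ℝ) (x : Pt n) (ρ : ℝ) :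
    ⨅ c : ℝ, ((volume (ball x ρ))⁻¹ * ∫⁻ z in ball x ρ, ENNReal.ofReal (|u z - c| ^ q)) ^ (2 / q) =
      lpOsc (ENNReal.ofReal q) volume u x ρ ^ 2 := by
  have hnorm (c : ℝ) : eLpNorm (fun z => u z - c) (ENNReal.ofReal q) volume[|ball x ρ] ^ (2 : ℝ) =
      ((volume (ball x ρ))⁻¹ * ∫⁻ z in ball x ρ, ENNReal.ofReal (|u z - c| ^ q)) ^ (2 / q) := by
    rw [eLpNorm_eq_lintegral_rpow_enorm_toReal (by simpa using hq) ofReal_ne_top,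
      ENNReal.toReal_ofReal hq.le, ← ENNReal.rpow_mul, ProbabilityTheory.cond,
      lintegral_smul_measure, smul_eq_mul, one_div_mul_eq_div]
    simp only [Real.enorm_eq_ofReal_abs, ENNReal.ofReal_rpow_of_nonneg (abs_nonneg _) hq.le]
  rw [lpOsc, ← ENNReal.rpow_two]
  simp only [← hnorm]
  exact ((ENNReal.orderIsoRpow 2 two_pos).map_iInf _).symm

theorem Psi_eq_dyadicOscEnergy (hq : 0 < q) (u : Pt n → ℝ) (x₀ : Pt n) (hr : 0 < r) :
    Psi α q u x₀ r = (volume (ball (0 : Pt n) 1))⁻¹ * (ENNReal.ofReal r ^ (2 * α - n) *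
      dyadicOscEnergy (ENNReal.ofReal q) volume α u (ball x₀ r) r) := by
  have hscale (k : ℕ) : (2 : ℝ) ^ (-(k : ℝ)) * r = r / 2 ^ k := by
    rw [Real.rpow_neg zero_le_two, Real.rpow_natCast, inv_mul_eq_div]
  have hweight (k : ℕ) : ENNReal.ofReal ((2 : ℝ) ^ (2 * (k : ℝ) * α)) =
      ((2 : ℝ≥0∞) ^ α) ^ (2 * k) := by
    rw [← ENNReal.ofReal_rpow_of_pos two_pos, ENNReal.ofReal_ofNat, ← ENNReal.rpow_natCast,
      ← ENNReal.rpow_mul]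
    push_cast
    ring_nf
  have hvol : ENNReal.ofReal r ^ (2 * α - n) * ENNReal.ofReal r ^ (-(2 * α)) *
      (volume (ball (0 : Pt n) 1))⁻¹ = (volume (ball x₀ r))⁻¹ := by
    rw [Measure.addHaar_ball_of_pos _ _ hr, finrank_euclideanSpace_fin, ENNReal.ofReal_pow hr.le,
      ENNReal.mul_inv (.inl (by simp [hr])) (.inl (by finiteness)),
      ← ENNReal.rpow_add _ _ (by simpa using hr) (by finiteness), ← ENNReal.rpow_natCast,
      ← ENNReal.rpow_neg]
    ring_nf
  rw [dyadicOscEnergy_eq_rpow_neg_mul_tsum, ← mul_assoc (_ ^ (2 * α - n)), ← mul_assoc,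
    mul_comm _⁻¹, hvol]
  simp only [Psi, hscale, hweight, iInf_rpow_two_div_eq_lpOsc_sq hq, mul_left_comm _ (volume _)⁻¹,
    ENNReal.tsum_mul_left]

theorem exists_Phi_div_le_mul_Psi (hn : n ≠ 0) (hα : 0 < α) (hq : 0 < q) (ha : 2 ≤ a) :
    ∃ C ≠ ∞, ∀ u : Pt n → ℝ, AEMeasurable u → ∀ (x₀ : Pt n) (r : ℝ), 0 < r →
      Phi α u x₀ (r / a) ≤ C * Psi α q u x₀ r := by
  obtain ⟨C, hC, hle⟩ := exists_gagliardoEnergy_le_mul_dyadicOscEnergy ℝ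
    (volume : Measure (Pt n)) (ENNReal.ofReal_pos.2 hq).ne' ofReal_ne_top hα
  set ω := volume (ball (0 : Pt n) 1)
  have hω0 : ω ≠ 0 := (measure_ball_pos volume 0 one_pos).ne'
  have hω : ω ≠ ∞ := measure_ball_lt_top.ne
  have ha0 : 0 < a := by linarith
  refine ⟨ω ^ (2 * α / n - 1) * ENNReal.ofReal a ^ (-(2 * α - n)) * C * ω, ?_,
    fun u hu x₀ r hr => ?_⟩
  · have : ENNReal.ofReal a ≠ 0 := by simpa
    finiteness
  have hball : ball x₀ (r / a) ⊆ ball x₀ r :=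
    ball_subset_ball (div_le_self hr.le (by linarith))
  have hdiam (x : Pt n) (hx : x ∈ ball x₀ (r / a)) (y : Pt n) (hy : y ∈ ball x₀ (r / a)) :
      dist x y < r := by
    have : 2 * (r / a) ≤ r := by rw [← mul_div_assoc, div_le_iff₀ ha0]; nlinarith
    linarith [dist_triangle_right x y x₀, mem_ball.1 hx, mem_ball.1 hy]
  calc Phi α u x₀ (r / a)
      ≤ ω ^ (2 * α / n - 1) * (ENNReal.ofReal a ^ (-(2 * α - n)) * ENNReal.ofReal r ^ (2 * α - n) *
          (C * dyadicOscEnergy (ENNReal.ofReal q) volume α u (ball x₀ r) r)) := by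
        rw [Phi_eq_gagliardoEnergy hn u x₀ (by positivity), ofReal_div_rpow _ _ ha0]
        grw [hle u _ r hu.aestronglyMeasurable measurableSet_ball hr hdiam,
          dyadicOscEnergy_mono hball]
    _ = ω ^ (2 * α / n - 1) * ENNReal.ofReal a ^ (-(2 * α - n)) * C * (ω * ω⁻¹) *
          (ENNReal.ofReal r ^ (2 * α - n) *
            dyadicOscEnergy (ENNReal.ofReal q) volume α u (ball x₀ r) r) := by
        rw [ENNReal.mul_inv_cancel hω0 hω]; ring
    _ = _ := by rw [Psi_eq_dyadicOscEnergy hq u x₀ hr]; ring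

theorem exists_Psi_le_mul_Phi_mul (hn : n ≠ 0) (hα : 0 < α) (hq : 0 < q) (hq' : q ≤ 2)
    (ha : 2 ≤ a) :
    ∃ C ≠ ∞, ∀ u : Pt n → ℝ, AEMeasurable u → ∀ (x₀ : Pt n) (r : ℝ), 0 < r →
      Psi α q u x₀ r ≤ C * Phi α u x₀ (a * r) := by
  obtain ⟨C, hC, hle⟩ := exists_dyadicOscEnergy_le_mul_gagliardoEnergy ℝ
    (volume : Measure (Pt n)) (p := ENNReal.ofReal q) (by simpa using ofReal_le_ofReal hq') hα
  set ω := volume (ball (0 : Pt n) 1)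
  have hω0 : ω ≠ 0 := (measure_ball_pos volume 0 one_pos).ne'
  have hω : ω ≠ ∞ := measure_ball_lt_top.ne
  have ha0 : 0 < a := by linarith
  refine ⟨ω⁻¹ * ENNReal.ofReal a ^ (-(2 * α - n)) * C * ω ^ (-(2 * α / n - 1)), ?_,
    fun u hu x₀ r hr => ?_⟩
  · have : ENNReal.ofReal a ≠ 0 := by simpa
    finiteness
  have hball (x : Pt n) (hx : x ∈ ball x₀ r) : ball x r ⊆ ball x₀ (a * r) :=
    ball_subset_ball' (by nlinarith [mem_ball.1 hx])
  have hr' : ENNReal.ofReal r ^ (2 * α - n) =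
      ENNReal.ofReal a ^ (-(2 * α - n)) * ENNReal.ofReal (a * r) ^ (2 * α - n) := by
    rw [← ofReal_div_rpow _ _ ha0, mul_div_cancel_left₀ r ha0.ne']
  calc Psi α q u x₀ r
      ≤ ω⁻¹ * (ENNReal.ofReal a ^ (-(2 * α - n)) * ENNReal.ofReal (a * r) ^ (2 * α - n) *
          (C * gagliardoEnergy volume α u (ball x₀ (a * r)))) := by
        rw [Psi_eq_dyadicOscEnergy hq u x₀ hr, hr']
        grw [hle u _ _ r hu.aestronglyMeasurable hr hball]
    _ = ω⁻¹ * ENNReal.ofReal a ^ (-(2 * α - n)) * C *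
          (ω ^ (-(2 * α / n - 1)) * ω ^ (2 * α / n - 1)) *
          (ENNReal.ofReal (a * r) ^ (2 * α - n) *
            gagliardoEnergy volume α u (ball x₀ (a * r))) := by
        rw [← ENNReal.rpow_add _ _ hω0 hω, neg_add_cancel, ENNReal.rpow_zero]; ring
    _ = _ := by rw [Phi_eq_gagliardoEnergy hn u x₀ (by positivity)]; ring

end Euclidean

theorem Phi_Psi_comparison_general (n : ℕ) (hn : 1 ≤ n) (α q a : ℝ) (hα : 0 < α)
    (hq : q ∈ Ioc (0 : ℝ) 2) (ha : 2 ≤ a) :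
    ∃ C > (0 : ℝ), ∀ u : Pt n → ℝ, AEMeasurable u → ∀ (x₀ : Pt n) (r : ℝ), 0 < r →
      Phi α u x₀ (r / a) ≤ ENNReal.ofReal C * Psi α q u x₀ r ∧
        Psi α q u x₀ r ≤ ENNReal.ofReal C * Phi α u x₀ (a * r) := by
  obtain ⟨C₁, hC₁, h₁⟩ := exists_Phi_div_le_mul_Psi (by lia : n ≠ 0) hα hq.1 ha
  obtain ⟨C₂, hC₂, h₂⟩ := exists_Psi_le_mul_Phi_mul (by lia : n ≠ 0) hα hq.1 hq.2 ha
  have hC : C₁ + C₂ + 1 ≠ ∞ := by finiteness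
  refine ⟨(C₁ + C₂ + 1).toReal, ENNReal.toReal_pos (by simp) hC, fun u hu x₀ r hr => ?_⟩
  rw [ENNReal.ofReal_toReal hC]
  constructor
  · grw [h₁ u hu x₀ r hr, add_assoc, ← le_self_add]
  · grw [h₂ u hu x₀ r hr, ← le_self_add (b := 1), ← le_add_self]

/-- for `α ∈ (0,1)` and `q ∈ (0,2]` there is `C > 0` (depending only on `n`,
`α`, `q`) with `C⁻¹ Φ_α(u, B(x₀, r/16)) ≤ Ψ_{α,q}(u, B(x₀,r)) ≤ C Φ_α(u, B(x₀, 16r))`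
for every measurable `u` and every ball. -/
theorem Phi_Psi_comparison (n : ℕ) (hn : 1 ≤ n) (α q : ℝ)
    (hα : α ∈ Ioo (0:ℝ) 1) (hq : q ∈ Ioc (0:ℝ) 2) :
    ∃ C > (0:ℝ), ∀ u : Pt n → ℝ, Measurable u → ∀ (x₀ : Pt n) (r : ℝ), 0 < r →
      Phi α u x₀ (r / 16) ≤ ENNReal.ofReal C * Psi α q u x₀ r ∧
      Psi α q u x₀ r ≤ ENNReal.ofReal C * Phi α u x₀ (16 * r) := by
  obtain ⟨C, hC, h⟩ := Phi_Psi_comparison_general n hn α q 16 hα.1 hq (by norm_num)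
  exact ⟨C, hC, fun u hu => h u hu.aemeasurable⟩

end
end

section
/- Let n ≥ 2 and let f : ℝⁿ → ℝⁿ be a homeomorphism that is η-quasisymmetric for some homeomorphism η : [0,∞) → [0,∞), and suppose f maps the hyperplane H = ℝ^{n−1}×{0} onto itself. Then there exists a constant C ≥ 1 depending only on η such that for every z₀ ∈ ℝⁿ \ H, every r with 0 < r ≤ dist(z₀,H)/2, and every z ∈ B(z₀,r): C⁻¹ dist(f(z₀), H) ≤ dist(f(z), H) ≤ C dist(f(z₀), H). -/
/-!
Quasisymmetry enters only through its weak form: a point `a` no farther from `x` than `b` has an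
image at most `K = η 1` times as far from `f x` as `f b` is. If `y` is no farther from `x` than
`S` is, letting `b` range over `S` gives `|f x - f y| ≤ K dist(f x, f(S))`, hence
`dist(f y, f(S)) ≤ (1 + K) dist(f x, f(S))`. On a ball `B(z₀, r)` with `r ≤ dist(z₀, S) / 2` this
applies to both `(z₀, z)` and `(z, z₀)`.
-/

open MeasureTheory Metric Filter Set ENNReal NNReal

noncomputable section

section WeaklyQuasisymmetric

variable {X Y : Type*} [PseudoMetricSpace X] [PseudoMetricSpace Y]

/-- Weak `K`-quasisymmetry of `f`: a point `a` that is no farther from `x` than `b` is mapped at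
most `K` times as far from `f x` as `b` is. Neither continuity nor injectivity of `f` is part of
the definition. -/
def IsWeaklyQuasisymmetric (K : ℝ≥0) (f : X → Y) : Prop :=
  ∀ x a b : X, dist x a ≤ dist x b → dist (f x) (f a) ≤ K * dist (f x) (f b)

theorem IsQS.isWeaklyQuasisymmetric {n : ℕ} {f : Pt n → Pt n} {η : ℝ≥0 ≃o ℝ≥0}
    (hf : IsQS f η) : IsWeaklyQuasisymmetric (η 1) f := by
  intro x a b hab
  rcases eq_or_ne x b with rfl | hxb
  · have hxa : x = a := dist_le_zero.1 (by rwa [dist_self] at hab)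
    simp [hxa]
  · have hratio : nndist x a / nndist x b ≤ 1 := div_le_one_of_le₀ hab zero_le
    have hη : nndist (f x) (f a) ≤ η 1 * nndist (f x) (f b) :=
      (hf x a b hxb).trans (by gcongr)
    exact_mod_cast hη

theorem le_mul_infDist {S : Set X} (hS : S.Nonempty) {c K : ℝ} (hK : 0 ≤ K) {x : X}
    (h : ∀ y ∈ S, c ≤ K * dist x y) : c ≤ K * infDist x S := by
  have := hS.to_subtype
  rw [infDist_eq_iInf, Real.mul_iInf_of_nonneg hK]
  exact le_ciInf fun y => h y y.2

namespace IsWeaklyQuasisymmetric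

variable {K : ℝ≥0} {f : X → Y} {S : Set X} {x y : X}

theorem dist_le_mul_infDist_image (hf : IsWeaklyQuasisymmetric K f) (hS : S.Nonempty)
    (hxy : dist x y ≤ infDist x S) : dist (f x) (f y) ≤ K * infDist (f x) (f '' S) :=
  le_mul_infDist (hS.image f) K.coe_nonneg <| forall_mem_image.2 fun b hb =>
    hf x y b (hxy.trans (infDist_le_dist_of_mem hb))

theorem infDist_image_le (hf : IsWeaklyQuasisymmetric K f) (hS : S.Nonempty)
    (hxy : dist x y ≤ infDist x S) :
    infDist (f y) (f '' S) ≤ (1 + K) * infDist (f x) (f '' S) :=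
  calc
    infDist (f y) (f '' S) ≤ infDist (f x) (f '' S) + dist (f y) (f x) :=
      infDist_le_infDist_add_dist
    _ ≤ infDist (f x) (f '' S) + K * infDist (f x) (f '' S) := by
      rw [dist_comm]
      gcongr
      exact hf.dist_le_mul_infDist_image hS hxy
    _ = (1 + K) * infDist (f x) (f '' S) := by ring

end IsWeaklyQuasisymmetric

theorem dist_image_hyperplane_comparable_general {K : ℝ≥0} {f : X → Y}
    (hf : IsWeaklyQuasisymmetric K f) {S : Set X} (hS : S.Nonempty) {z₀ z : X}
    (hz : dist z z₀ ≤ infDist z₀ S / 2) :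
    (1 + K : ℝ)⁻¹ * infDist (f z₀) (f '' S) ≤ infDist (f z) (f '' S) ∧
      infDist (f z) (f '' S) ≤ (1 + K) * infDist (f z₀) (f '' S) := by
  have hz₀_le : dist z₀ z ≤ infDist z₀ S := by
    rw [dist_comm]
    exact hz.trans (half_le_self infDist_nonneg)
  have hz_le : dist z z₀ ≤ infDist z S := by
    have htri : infDist z₀ S ≤ infDist z S + dist z₀ z := infDist_le_infDist_add_dist
    rw [dist_comm z₀] at htri
    linarith
  exact ⟨(inv_mul_le_iff₀ (by positivity)).2 (hf.infDist_image_le hS hz_le),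
    hf.infDist_image_le hS hz₀_le⟩

end WeaklyQuasisymmetric

theorem Hset_nonempty (n : ℕ) : (Hset n).Nonempty := ⟨0, fun _ _ => rfl⟩

/-- if a quasisymmetric homeomorphism of `ℝⁿ` maps the hyperplane
`H = ℝ^{n-1} × {0}` onto itself, then on Whitney-type balls the distance of the image to
`H` is essentially constant, with a constant depending only on `η`. -/
theorem dist_image_hyperplane_comparable (n : ℕ) (hn : 2 ≤ n) (η : ℝ≥0 ≃o ℝ≥0) :
    ∃ C ≥ (1:ℝ), ∀ f : Pt n ≃ₜ Pt n, IsQS (⇑f) η → (⇑f) '' Hset n = Hset n →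
      ∀ z₀ : Pt n, z₀ ∉ Hset n → ∀ r : ℝ, 0 < r → r ≤ Metric.infDist z₀ (Hset n) / 2 →
        ∀ z ∈ ball z₀ r,
          C⁻¹ * Metric.infDist (f z₀) (Hset n) ≤ Metric.infDist (f z) (Hset n) ∧
          Metric.infDist (f z) (Hset n) ≤ C * Metric.infDist (f z₀) (Hset n) := by
  refine ⟨1 + η 1, le_add_of_nonneg_right (η 1).coe_nonneg, fun f hf hH z₀ _ r _ hr z hz => ?_⟩
  simpa only [hH] using dist_image_hyperplane_comparable_general hf.isWeaklyQuasisymmetric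
    (Hset_nonempty n) ((mem_ball.1 hz).le.trans hr)

end
end

section
/- Let n ≥ 1 and let f : ℝⁿ → ℝⁿ be a homeomorphism that is η-quasisymmetric for some homeomorphism η : [0,∞) → [0,∞). For z ∈ ℝⁿ and t > 0 set L_f(z,t) = sup{ |f(z)−f(w)| : |z−w| ≤ t }. Then there exists a constant C depending only on η such that for every z ∈ ℝⁿ, every r > 0 and every j ∈ ℤ, the number of integers k ∈ ℤ with L_f(z, 2^{−k} r) ∈ [ 2^{−j−1} L_f(z,r), 2^{−j} L_f(z,r) ) is at most C. -/
/-!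
The quasisymmetry inequality at `z` compares maximal stretches at different radii: testing it
against a point at distance exactly `t` from `z` gives `L_f(z, s) ≤ η(q) L_f(z, t)` whenever
`s ≤ q t`. As `η(q) → 0` when `q → 0`, some `m` depending only on `η` satisfies
`η(2^{-m}) ≤ 1/2`, so `m` successive halvings of the radius at least halve the stretch. Two scales
whose stretches lie in the same half-open dyadic band are then fewer than `m` halvings apart, and
a set of integers of diameter less than `m` has at most `m` elements.
-/

open MeasureTheory Metric Filter Set ENNReal NNReal

noncomputable section

open scoped Topology

theorem finite_and_ncard_le_of_forall_lt_add {S : Set ℤ} {m : ℕ}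
    (hS : ∀ k ∈ S, ∀ l ∈ S, l < k + m) : S.Finite ∧ S.ncard ≤ m := by
  obtain rfl | hne := S.eq_empty_or_nonempty
  · simp
  have hbdd : BddBelow S := by
    obtain ⟨k₀, hk₀⟩ := hne
    exact ⟨k₀ - m, fun k hk => (sub_lt_iff_lt_add.2 (hS k hk k₀ hk₀)).le⟩
  have hsub : S ⊆ Finset.Ico (sInf S) (sInf S + m) := fun k hk =>
    Finset.mem_coe.2 <| Finset.mem_Ico.2
      ⟨csInf_le hbdd hk, hS _ (Int.csInf_mem hne hbdd) k hk⟩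
  refine ⟨(Finset.finite_toSet _).subset hsub, ?_⟩
  calc S.ncard ≤ (Finset.Ico (sInf S) (sInf S + m) : Set ℤ).ncard :=
        ncard_le_ncard hsub (Finset.finite_toSet _)
    _ = m := by rw [ncard_coe_finset, Int.card_Ico, add_sub_cancel_left, Int.toNat_natCast]

theorem finite_and_ncard_setOf_mem_Ico_le_of_mul_le {R : Type*} [Semiring R] [Preorder R]
    [PosMulMono R] {a : ℤ → R} {m : ℕ} {M : R} (hM : 0 ≤ M)
    (ha : ∀ k l : ℤ, k + m ≤ l → M * a l ≤ a k) (c : R) :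
    {k | a k ∈ Ico c (M * c)}.Finite ∧ {k | a k ∈ Ico c (M * c)}.ncard ≤ m := by
  refine finite_and_ncard_le_of_forall_lt_add fun k hk l hl => lt_of_not_ge fun hkl => ?_
  exact (calc a k < M * c := hk.2
    _ ≤ M * a l := mul_le_mul_of_nonneg_left hl.1 hM
    _ ≤ a k := ha k l hkl).false

section Quasisymmetric

variable {X Y : Type*} [MetricSpace X] [PseudoMetricSpace Y]

/-- `η`-quasisymmetry of a map between metric spaces. The control function `η` is not
required to be a homeomorphism of `[0, ∞)`: monotonicity and decay at `0` are separate
assumptions. On `Pt n` this is `IsQS` by unfolding. -/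
def IsQuasisymmetric (η : ℝ≥0 → ℝ≥0) (f : X → Y) : Prop :=
  ∀ x a b : X, x ≠ b →
    nndist (f x) (f a) ≤ η (nndist x a / nndist x b) * nndist (f x) (f b)

/-- The maximal stretch `L_f(z, t) = sup {d(f z, f w) : d(z, w) ≤ t}`; it has the junk value `0`
if `f` is unbounded on the closed ball. On `Pt n` this is `Lf` by unfolding. -/
def maxStretch (f : X → Y) (z : X) (t : ℝ) : ℝ :=
  sSup ((fun w => dist (f z) (f w)) '' closedBall z t)

variable {η : ℝ≥0 → ℝ≥0} {f : X → Y} {z : X}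

theorem maxStretch_nonneg (f : X → Y) (z : X) (t : ℝ) : 0 ≤ maxStretch f z t :=
  Real.sSup_nonneg <| forall_mem_image.2 fun _ _ => dist_nonneg

namespace IsQuasisymmetric

theorem dist_le_mul_dist (hf : IsQuasisymmetric η f) (hη : Monotone η) {b w : X} (hzb : z ≠ b)
    {q : ℝ≥0} (hw : dist z w ≤ q * dist z b) :
    dist (f z) (f w) ≤ η q * dist (f z) (f b) := by
  have hratio : nndist z w / nndist z b ≤ q := by
    rw [← NNReal.coe_le_coe, NNReal.coe_div, coe_nndist, coe_nndist,
      div_le_iff₀ (dist_pos.2 hzb)]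
    exact hw
  have hnn : nndist (f z) (f w) ≤ η q * nndist (f z) (f b) := by
    grw [hf z w b hzb, hη hratio]
  exact_mod_cast hnn

theorem bddAbove_image_dist_closedBall [Nontrivial X] (hf : IsQuasisymmetric η f)
    (hη : Monotone η) (z : X) (t : ℝ) :
    BddAbove ((fun w => dist (f z) (f w)) '' closedBall z t) := by
  obtain ⟨b, hbz⟩ := exists_ne z
  refine ⟨η (t / dist z b).toNNReal * dist (f z) (f b), forall_mem_image.2 fun w hw => ?_⟩
  refine hf.dist_le_mul_dist hη hbz.symm ?_
  rw [← div_le_iff₀ (dist_pos.2 hbz.symm)]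
  grw [mem_closedBall'.1 hw]
  exact Real.le_coe_toNNReal _

theorem dist_le_maxStretch [Nontrivial X] (hf : IsQuasisymmetric η f) (hη : Monotone η)
    {w : X} {t : ℝ} (hw : dist z w ≤ t) : dist (f z) (f w) ≤ maxStretch f z t :=
  le_csSup (hf.bddAbove_image_dist_closedBall hη z t)
    (mem_image_of_mem _ (mem_closedBall'.2 hw))

theorem maxStretch_le_mul_maxStretch (hf : IsQuasisymmetric η f) (hη : Monotone η) {s t : ℝ}
    (ht : 0 < t) (hsphere : (sphere z t).Nonempty) {q : ℝ≥0} (hst : s ≤ q * t) :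
    maxStretch f z s ≤ η q * maxStretch f z t := by
  obtain ⟨b, hb⟩ := hsphere
  obtain rfl : dist z b = t := mem_sphere'.1 hb
  have hzb : z ≠ b := dist_pos.1 ht
  have : Nontrivial X := ⟨z, b, hzb⟩
  refine Real.sSup_le (forall_mem_image.2 fun w hw => ?_)
    (mul_nonneg (η q).coe_nonneg (maxStretch_nonneg f z _))
  calc dist (f z) (f w) ≤ η q * dist (f z) (f b) :=
        hf.dist_le_mul_dist hη hzb ((mem_closedBall'.1 hw).trans hst)
    _ ≤ η q * maxStretch f z (dist z b) :=
        mul_le_mul_of_nonneg_left (hf.dist_le_maxStretch hη le_rfl) (η q).coe_nonneg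

theorem two_mul_maxStretch_zpow_le (hf : IsQuasisymmetric η f) (hη : Monotone η) {m : ℕ}
    (hm : η (2⁻¹ ^ m) ≤ 2⁻¹) {r : ℝ} (hr : 0 < r) {k l : ℤ}
    (hsphere : (sphere z (2 ^ (-k) * r)).Nonempty) (hkl : k + m ≤ l) :
    2 * maxStretch f z (2 ^ (-l) * r) ≤ maxStretch f z (2 ^ (-k) * r) := by
  have hradius : (2 : ℝ) ^ (-l) * r ≤ (2⁻¹ ^ m : ℝ≥0) * (2 ^ (-k) * r) :=
    calc (2 : ℝ) ^ (-l) * r ≤ 2 ^ (-(m : ℤ) + -k) * r := by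
          gcongr
          · exact one_le_two
          · lia
      _ = (2⁻¹ ^ m : ℝ≥0) * (2 ^ (-k) * r) := by
          rw [zpow_add₀ two_ne_zero, mul_assoc]
          simp
  have hdecay := hf.maxStretch_le_mul_maxStretch hη (by positivity) hsphere hradius
  have hm' : (η (2⁻¹ ^ m) : ℝ) ≤ 2⁻¹ := by exact_mod_cast hm
  grw [hm'] at hdecay
  · linarith
  · exact maxStretch_nonneg f z _

theorem finite_and_ncard_scales_mem_Ico_le (hf : IsQuasisymmetric η f) (hη : Monotone η) {m : ℕ}
    (hm : η (2⁻¹ ^ m) ≤ 2⁻¹) {r : ℝ} (hr : 0 < r)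
    (hsphere : ∀ k : ℤ, (sphere z (2 ^ (-k) * r)).Nonempty) (c : ℝ) :
    {k : ℤ | maxStretch f z (2 ^ (-k) * r) ∈ Ico c (2 * c)}.Finite ∧
      {k : ℤ | maxStretch f z (2 ^ (-k) * r) ∈ Ico c (2 * c)}.ncard ≤ m :=
  finite_and_ncard_setOf_mem_Ico_le_of_mul_le zero_le_two
    (fun k _ => hf.two_mul_maxStretch_zpow_le hη hm hr (hsphere k)) c

end IsQuasisymmetric

end Quasisymmetric

theorem exists_apply_pow_le {η : ℝ≥0 → ℝ≥0} (hη₀ : Tendsto η (𝓝 0) (𝓝 0)) {q ε : ℝ≥0}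
    (hq : q < 1) (hε : 0 < ε) : ∃ m : ℕ, η (q ^ m) ≤ ε :=
  ((hη₀.comp (tendsto_pow_atTop_nhds_zero_of_lt_one zero_le hq)).eventually_le_const hε).exists

theorem scales_in_dyadic_band_bounded_general {η : ℝ≥0 → ℝ≥0} (hη : Monotone η)
    (hη₀ : Tendsto η (𝓝 0) (𝓝 0)) :
    ∃ C : ℕ, ∀ (X Y : Type*) [MetricSpace X] [PseudoMetricSpace Y] (f : X → Y),
      IsQuasisymmetric η f → ∀ z : X, (∀ t : ℝ, 0 < t → (sphere z t).Nonempty) →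
      ∀ r : ℝ, 0 < r → ∀ j : ℤ,
        {k : ℤ | maxStretch f z (2 ^ (-k) * r) ∈
            Ico (2 ^ (-j - 1) * maxStretch f z r) (2 ^ (-j) * maxStretch f z r)}.Finite ∧
        {k : ℤ | maxStretch f z (2 ^ (-k) * r) ∈
            Ico (2 ^ (-j - 1) * maxStretch f z r) (2 ^ (-j) * maxStretch f z r)}.ncard ≤ C := by
  obtain ⟨m, hm⟩ : ∃ m : ℕ, η (2⁻¹ ^ m) ≤ 2⁻¹ :=
    exists_apply_pow_le hη₀ (inv_lt_one_of_one_lt₀ one_lt_two) (by positivity)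
  refine ⟨m, fun X Y _ _ f hf z hsphere r hr j => ?_⟩
  have hband : (2 : ℝ) ^ (-j) * maxStretch f z r = 2 * (2 ^ (-j - 1) * maxStretch f z r) := by
    rw [zpow_sub_one₀ two_ne_zero]
    ring
  rw [hband]
  exact hf.finite_and_ncard_scales_mem_Ico_le hη hm hr (fun k => hsphere _ (by positivity)) _

/-- for a quasisymmetric homeomorphism `f`, at most a bounded number
(depending only on `η`) of the scales `L_f(z, 2^{-k} r)`, `k ∈ ℤ`, can lie in any fixed
dyadic band `[2^{-j-1} L_f(z,r), 2^{-j} L_f(z,r))`. -/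
theorem scales_in_dyadic_band_bounded (n : ℕ) (hn : 1 ≤ n) (η : ℝ≥0 ≃o ℝ≥0) :
    ∃ C : ℕ, ∀ f : Pt n ≃ₜ Pt n, IsQS (⇑f) η →
      ∀ (z : Pt n) (r : ℝ), 0 < r → ∀ j : ℤ,
        ({k : ℤ | Lf (⇑f) z ((2:ℝ) ^ (-k) * r) ∈
            Ico ((2:ℝ) ^ (-j - 1) * Lf (⇑f) z r) ((2:ℝ) ^ (-j) * Lf (⇑f) z r)}).Finite ∧
        ({k : ℤ | Lf (⇑f) z ((2:ℝ) ^ (-k) * r) ∈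
            Ico ((2:ℝ) ^ (-j - 1) * Lf (⇑f) z r) ((2:ℝ) ^ (-j) * Lf (⇑f) z r)}).ncard ≤ C := by
  have : NeZero n := ⟨Nat.one_le_iff_ne_zero.1 hn⟩
  obtain ⟨C, hC⟩ := scales_in_dyadic_band_bounded_general η.monotone
    (η.continuous.tendsto' 0 0 (map_bot η))
  exact ⟨C, fun f hf z => hC _ _ f hf z fun t ht => NormedSpace.sphere_nonempty.2 ht.le⟩

end
end
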